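/- arXiv:1803.10802 — 3 statements merged into one kernel-verified Lean document; each statement's English description precedes it below -/
import Mathlib

section
/- For every positive integer n, the 3-adic valuation of the sum of central binomial coefficients ∑_{k=0}^{n-1} C(2k,k) equals the 3-adic valuation of n² · C(2n,n). -/
/-!
Put `I m = ∫₀¹ (1 + 3 t²)ᵐ dt = ∑ⱼ C(m,j) 3ʲ / (2j+1)`. Integration by parts gives
`4ⁿ ∑_{k<n} C(2k,k) = 2 n C(2n,n) I (n - 1)`, so the claim is that `I m` and `m + 1` have the same
3-adic norm.

In `ℤ₃`, `C(m,i) ≡ (-1)ⁱ` modulo `m + 1` up to small denominators, because `C(-1,i) = (-1)ⁱ`.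
Hence `I m` is close to `L + (m + 1)`, where `L = ∑ⱼ (-3)ʲ / (2j+1)` and the summand `m + 1` comes
from `j = 1`. The same congruence, now at `i = 2j`, shows that `L` is close to
`∑ⱼ C(m,2j) (-3)ʲ / (2j+1)`, which is the coefficient of `√-3` in `(1 + √-3)ᵐ⁺¹ / (m + 1)`. It
vanishes when `3 ∣ m + 1` since `(1 + √-3)³ = -8`, so `m + 1 = 3ᵏ` with `k → ∞` gives `L = 0`.
-/

open Finset

section Field

variable {K : Type*} [Field K]

/-- The integral `∫₀¹ (1 + x t²)ᵐ dt`, expanded binomially and integrated term by term, so that it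
makes sense for `x` in any field of characteristic zero. -/
def binomialIntegral (x : K) (m : ℕ) : K :=
  ∑ j ∈ range (m + 1), m.choose j * x ^ j / (2 * j + 1)

theorem binomialIntegral_zero (x : K) : binomialIntegral x 0 = 1 := by
  simp [binomialIntegral]

theorem hasSum_binomialIntegral [TopologicalSpace K] (x : K) (m : ℕ) :
    HasSum (fun j : ℕ ↦ m.choose j * x ^ j / (2 * j + 1)) (binomialIntegral x m) := by
  refine hasSum_sum_of_ne_finset_zero fun j hj ↦ ?_
  have : m < j := by simpa using hj
  rw [Nat.choose_eq_zero_of_lt this, Nat.cast_zero, zero_mul, zero_div]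

variable [CharZero K]

-- Integration by parts, carried out on coefficients.
theorem binomialIntegral_succ (x : K) (m : ℕ) :
    (2 * m + 3) * binomialIntegral x (m + 1) =
      2 * (m + 1) * binomialIntegral x m + (1 + x) ^ (m + 1) := by
  have extend : binomialIntegral x m =
      ∑ j ∈ range (m + 2), m.choose j * x ^ j / (2 * j + 1) := by
    simp [sum_range_succ _ (m + 1), binomialIntegral]
  have expand : (1 + x) ^ (m + 1) = ∑ j ∈ range (m + 2), ((m + 1).choose j : K) * x ^ j := by
    rw [add_comm, add_pow]
    exact sum_congr rfl fun j _ ↦ by ring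
  rw [extend, expand, binomialIntegral, mul_sum, mul_sum, ← sum_add_distrib]
  refine sum_congr rfl fun j hj ↦ ?_
  have choose_succ : (m.choose j : K) * (m + 1) = (m + 1).choose j * (m + 1 - j) := by
    have := Nat.choose_mul_succ_eq m j
    rw [← Nat.cast_succ, ← Nat.cast_sub (mem_range_succ_iff.1 hj)]
    exact_mod_cast this
  have : (2 * j + 1 : K) ≠ 0 := by exact_mod_cast (2 * j).succ_ne_zero
  field_simp
  linear_combination -2 * x ^ j * choose_succ

theorem sum_centralBinom_mul_pow (x : K) (m : ℕ) :
    (∑ k ∈ range (m + 1), k.centralBinom * ((1 + x) / 4) ^ k) * 4 ^ (m + 1) =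
      2 * (m + 1) * (m + 1).centralBinom * binomialIntegral x m := by
  induction m with
  | zero => norm_num [binomialIntegral_zero, Nat.centralBinom]
  | succ m ih =>
    have centralBinom_succ : ((m : K) + 2) * (m + 2).centralBinom =
        2 * (2 * m + 3) * (m + 1).centralBinom := by
      have := Nat.succ_mul_centralBinom_succ (m + 1)
      push_cast [← @Nat.cast_inj K] at this
      linear_combination this
    have pow_eq : ((1 + x) / 4) ^ (m + 1) * 4 ^ (m + 1) = (1 + x) ^ (m + 1) := by
      rw [← mul_pow, div_mul_cancel₀ _ (by norm_num)]
    rw [sum_range_succ, add_mul, pow_succ 4 (m + 1)]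
    push_cast
    linear_combination 4 * ih - 4 * ((m + 1).centralBinom : K) * binomialIntegral_succ x m
      - 2 * binomialIntegral x (m + 1) * centralBinom_succ + 4 * ((m + 1).centralBinom : K) * pow_eq

end Field

section Sqrt

theorem sum_range_two_mul {M : Type*} [AddCommMonoid M] (f : ℕ → M) (N : ℕ) :
    ∑ i ∈ range (2 * N), f i = ∑ j ∈ range N, f (2 * j) + ∑ j ∈ range N, f (2 * j + 1) := by
  induction N with
  | zero => simp
  | succ N ih => simp only [Nat.mul_succ, sum_range_succ, ih]; abel

theorem one_add_sqrtd_pow (d : ℤ) {n N : ℕ} (h : n < 2 * N) :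
    (1 + Zsqrtd.sqrtd : ℤ√d) ^ n =
      ⟨∑ j ∈ range N, n.choose (2 * j) * d ^ j, ∑ j ∈ range N, n.choose (2 * j + 1) * d ^ j⟩ := by
  have binomial : (1 + Zsqrtd.sqrtd : ℤ√d) ^ n =
      ∑ i ∈ range (2 * N), (n.choose i : ℤ√d) * Zsqrtd.sqrtd ^ i := by
    rw [add_comm, add_pow]
    refine sum_subset_zero_on_sdiff (range_subset_range.2 h) (fun i hi ↦ ?_) fun i _ ↦ by ring
    rw [Nat.choose_eq_zero_of_lt (by simpa using (mem_sdiff.1 hi).2), Nat.cast_zero, zero_mul]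
  have sqrtd_pow (j : ℕ) : (Zsqrtd.sqrtd : ℤ√d) ^ (2 * j) = (d : ℤ√d) ^ j := by
    rw [pow_mul, sq, Zsqrtd.dmuld]
  rw [binomial, sum_range_two_mul, Zsqrtd.decompose]
  push_cast
  simp only [pow_succ, sqrtd_pow, mul_sum]
  congr 1
  exact sum_congr rfl fun j _ ↦ by ring

theorem im_one_add_sqrtd_neg_three_pow {n : ℕ} (h : 3 ∣ n) :
    ((1 + Zsqrtd.sqrtd : ℤ√(-3)) ^ n).im = 0 := by
  obtain ⟨k, rfl⟩ := h
  have cube : (1 + Zsqrtd.sqrtd : ℤ√(-3)) ^ 3 = (-8 : ℤ) := by decide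
  rw [pow_mul, cube, ← Int.cast_pow, Zsqrtd.im_intCast]

theorem sum_choose_two_mul_mul_neg_three_pow_div {K : Type*} [Field K] [CharZero K] {m : ℕ}
    (h : 3 ∣ m + 1) :
    ∑ j ∈ range (m + 1), (m.choose (2 * j) : K) * (-3) ^ j / (2 * j + 1) = 0 := by
  have im_eq : ∑ j ∈ range (m + 1), ((m + 1).choose (2 * j + 1) : ℤ) * (-3) ^ j = 0 := by
    rw [← im_one_add_sqrtd_neg_three_pow h, one_add_sqrtd_pow (-3) (N := m + 1) (by omega)]
  have ne_zero : (m + 1 : K) ≠ 0 := by exact_mod_cast m.succ_ne_zero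
  refine (mul_eq_zero.1 ?_).resolve_left ne_zero
  trans ((∑ j ∈ range (m + 1), ((m + 1).choose (2 * j + 1) : ℤ) * (-3) ^ j : ℤ) : K)
  · push_cast
    rw [mul_sum]
    refine sum_congr rfl fun j _ ↦ ?_
    have absorb : (m + 1 : K) * m.choose (2 * j) = (m + 1).choose (2 * j + 1) * (2 * j + 1) := by
      exact_mod_cast m.add_one_mul_choose_eq (2 * j)
    have : (2 * j + 1 : K) ≠ 0 := by exact_mod_cast (2 * j).succ_ne_zero
    field_simp
    linear_combination absorb
  · rw [im_eq, Int.cast_zero]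

end Sqrt

section Log

theorem log_add_log_lt {b x y e : ℕ} (hb : 1 < b) (hx : x ≠ 0) (hy : y ≠ 0) (h : x * y < b ^ e) :
    Nat.log b x + Nat.log b y < e := by
  rw [← Nat.pow_lt_pow_iff_right hb, pow_add]
  exact (Nat.mul_le_mul (Nat.pow_log_le_self b hx) (Nat.pow_log_le_self b hy)).trans_lt h

theorem log_two_mul_add_log_two_mul_add_one_le {b : ℕ} (hb : 3 ≤ b) (j : ℕ) :
    Nat.log b (2 * j) + Nat.log b (2 * j + 1) ≤ j := by
  rcases Nat.eq_zero_or_pos j with rfl | hj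
  · simp
  have mul_lt_pow : 2 * j * (2 * j + 1) < 3 ^ (j + 1) := by
    induction j, hj using Nat.le_induction with
    | base => norm_num
    | succ j hj ih => rw [pow_succ]; nlinarith
  exact Nat.lt_succ_iff.1 (log_add_log_lt (by omega) (by omega) (by omega)
    (mul_lt_pow.trans_le (Nat.pow_le_pow_left hb _)))

theorem log_add_log_two_mul_add_one_lt {b j : ℕ} (hb : 3 ≤ b) (hj : 2 ≤ j) :
    Nat.log b j + Nat.log b (2 * j + 1) < j := by
  rcases hj.eq_or_lt with rfl | three_le
  · have log_two : Nat.log b 2 = 0 := Nat.log_of_lt (by omega)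
    have log_five : Nat.log b (2 * 2 + 1) < 2 := Nat.log_lt_of_lt_pow (by norm_num) (by nlinarith)
    omega
  have mul_lt_pow : j * (2 * j + 1) < 3 ^ j := by
    clear hj
    induction j, three_le using Nat.le_induction with
    | base => norm_num
    | succ j _ ih => rw [pow_succ]; nlinarith
  exact log_add_log_lt (by omega) (by omega) (by omega)
    (mul_lt_pow.trans_le (Nat.pow_le_pow_left hb _))

end Log

section Padic

variable {p : ℕ} [Fact p.Prime]

theorem norm_inv_natCast_le (D : ℕ) : ‖(D : ℚ_[p])⁻¹‖ ≤ (p : ℝ) ^ Nat.log p D := by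
  rcases eq_or_ne D 0 with rfl | hD
  · simp
  · rw [norm_inv, Padic.norm_eq_zpow_neg_valuation (by exact_mod_cast hD), Padic.valuation_natCast,
      zpow_neg, inv_inv, zpow_natCast]
    exact pow_le_pow_right₀ (by exact_mod_cast (Fact.out : p.Prime).one_le)
      (padicValNat_le_nat_log D)

theorem norm_choose_sub_neg_one_pow_le (m i : ℕ) :
    ‖(m.choose i : ℚ_[p]) - (-1) ^ i‖ ≤ ‖(m + 1 : ℚ_[p])‖ * p ^ Nat.log p i := by
  induction i with
  | zero => simp
  | succ i ih =>
    have pascal : (m.choose (i + 1) : ℚ_[p]) - (-1) ^ (i + 1) =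
        (m + 1) * (m.choose i * ((i + 1 : ℕ) : ℚ_[p])⁻¹) + ((-1) ^ i - m.choose i) := by
      have absorb : ((m + 1) * m.choose i : ℚ_[p]) = (m.choose i + m.choose (i + 1)) * (i + 1) := by
        exact_mod_cast m.choose_succ_succ i ▸ m.add_one_mul_choose_eq i
      have : (i + 1 : ℚ_[p]) ≠ 0 := by exact_mod_cast i.succ_ne_zero
      push_cast
      field_simp
      linear_combination -absorb
    rw [pascal]
    refine (IsUltrametricDist.norm_add_le_max _ _).trans (max_le ?_ ?_)
    · rw [norm_mul, norm_mul]
      gcongr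
      calc ‖(m.choose i : ℚ_[p])‖ * ‖((i + 1 : ℕ) : ℚ_[p])⁻¹‖
          ≤ 1 * p ^ Nat.log p (i + 1) := by
            gcongr
            · exact IsUltrametricDist.norm_natCast_le_one _ _
            · exact norm_inv_natCast_le _
        _ = p ^ Nat.log p (i + 1) := one_mul _
    · rw [norm_sub_rev]
      refine ih.trans ?_
      gcongr
      · exact_mod_cast (Fact.out : p.Prime).one_le
      · omega

theorem norm_choose_sub_neg_one_pow_mul_le {x : ℚ_[p]} (hx : ‖x‖ < 1) (m : ℕ)
    {i j D e : ℕ} (h : Nat.log p i + Nat.log p D + e ≤ j) :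
    ‖(m.choose i - (-1) ^ i) * (x ^ j / (D : ℚ_[p]))‖ ≤ ‖(m + 1 : ℚ_[p])‖ * (p : ℝ)⁻¹ ^ e := by
  have one_le : (1 : ℝ) ≤ p := by exact_mod_cast (Fact.out : p.Prime).one_le
  have norm_le : ‖x‖ ≤ (p : ℝ)⁻¹ := by
    simpa using (Padic.norm_le_pow_iff_norm_lt_pow_add_one x (-1)).2 (by simpa using hx)
  calc ‖(m.choose i - (-1) ^ i) * (x ^ j / (D : ℚ_[p]))‖
      = ‖(m.choose i : ℚ_[p]) - (-1) ^ i‖ * (‖x‖ ^ j * ‖(D : ℚ_[p])⁻¹‖) := by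
        rw [div_eq_mul_inv, norm_mul, norm_mul, norm_pow]
    _ ≤ ‖(m + 1 : ℚ_[p])‖ * p ^ Nat.log p i * ((p : ℝ)⁻¹ ^ j * p ^ Nat.log p D) := by
        gcongr
        · exact norm_choose_sub_neg_one_pow_le m i
        · exact norm_inv_natCast_le D
    _ = ‖(m + 1 : ℚ_[p])‖ * ((p : ℝ)⁻¹ ^ j * p ^ (Nat.log p i + Nat.log p D)) := by ring
    _ ≤ ‖(m + 1 : ℚ_[p])‖ * ((p : ℝ)⁻¹ ^ (Nat.log p i + Nat.log p D + e) *
          p ^ (Nat.log p i + Nat.log p D)) := by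
        gcongr ?_ * (?_ * ?_)
        exact pow_le_pow_of_le_one (by positivity) (inv_le_one_of_one_le₀ one_le) h
    _ = ‖(m + 1 : ℚ_[p])‖ * (p : ℝ)⁻¹ ^ e := by
        rw [pow_add _ _ e, mul_right_comm, ← mul_pow, inv_mul_cancel₀ (by positivity), one_pow,
          one_mul]

theorem summable_pow_div_two_mul_add_one {x : ℚ_[p]} (hx : ‖x‖ < 1) :
    Summable fun j : ℕ ↦ x ^ j / (2 * j + 1) := by
  apply NonarchimedeanAddGroup.summable_of_tendsto_cofinite_zero
  rw [Nat.cofinite_eq_atTop]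
  have majorant : Filter.Tendsto (fun j : ℕ ↦ 2 * (j * ‖x‖ ^ j) + ‖x‖ ^ j)
      Filter.atTop (nhds 0) := by
    simpa using ((tendsto_self_mul_const_pow_of_lt_one (norm_nonneg x) hx).const_mul 2).add
      (tendsto_pow_atTop_nhds_zero_of_lt_one (norm_nonneg x) hx)
  refine squeeze_zero_norm (fun j ↦ ?_) majorant
  have norm_inv_le : ‖(2 * j + 1 : ℚ_[p])⁻¹‖ ≤ 2 * j + 1 := by
    have := norm_inv_natCast_le (p := p) (2 * j + 1)
    push_cast at this
    exact this.trans (by exact_mod_cast Nat.pow_log_le_self p (2 * j).succ_ne_zero)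
  calc ‖x ^ j / (2 * j + 1)‖ = ‖x‖ ^ j * ‖(2 * j + 1 : ℚ_[p])⁻¹‖ := by
        rw [div_eq_mul_inv, norm_mul, norm_pow]
    _ ≤ ‖x‖ ^ j * (2 * j + 1) := by gcongr
    _ = 2 * (j * ‖x‖ ^ j) + ‖x‖ ^ j := by ring

theorem padicValNat_eq_of_norm_eq {a b : ℕ} (ha : a ≠ 0) (hb : b ≠ 0)
    (h : ‖(a : ℚ_[p])‖ = ‖(b : ℚ_[p])‖) : padicValNat p a = padicValNat p b := by
  have one_lt : (1 : ℝ) < p := by exact_mod_cast (Fact.out : p.Prime).one_lt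
  rw [Padic.norm_eq_zpow_neg_valuation (by exact_mod_cast ha),
    Padic.norm_eq_zpow_neg_valuation (by exact_mod_cast hb),
    zpow_right_inj₀ (by positivity) one_lt.ne', Padic.valuation_natCast,
    Padic.valuation_natCast] at h
  omega

theorem norm_sum_choose_two_mul_sub_tsum_le (hp : 3 ≤ p) {x : ℚ_[p]} (hx : ‖x‖ < 1)
    (m : ℕ) :
    ‖∑ j ∈ range (m + 1), (m.choose (2 * j) : ℚ_[p]) * x ^ j / (2 * j + 1) -
        ∑' j : ℕ, x ^ j / (2 * j + 1)‖ ≤ ‖(m + 1 : ℚ_[p])‖ := by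
  have hasSum_choose : HasSum (fun j : ℕ ↦ (m.choose (2 * j) : ℚ_[p]) * x ^ j / (2 * j + 1))
      (∑ j ∈ range (m + 1), (m.choose (2 * j) : ℚ_[p]) * x ^ j / (2 * j + 1)) := by
    refine hasSum_sum_of_ne_finset_zero fun j hj ↦ ?_
    have : m < 2 * j := by grind
    rw [Nat.choose_eq_zero_of_lt this, Nat.cast_zero, zero_mul, zero_div]
  rw [← (hasSum_choose.sub (summable_pow_div_two_mul_add_one hx).hasSum).tsum_eq]
  refine IsUltrametricDist.norm_tsum_le_of_forall_le_of_nonneg (norm_nonneg _) fun j ↦ ?_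
  have term_le := norm_choose_sub_neg_one_pow_mul_le hx m (e := 0)
    (log_two_mul_add_log_two_mul_add_one_le hp j)
  rw [pow_zero, mul_one, pow_mul, neg_one_sq, one_pow] at term_le
  refine (congrArg norm ?_).trans_le term_le
  push_cast
  ring

theorem hasSum_choose_sub_neg_one_pow_mul {x : ℚ_[p]} (hx : ‖x‖ < 1) (m : ℕ) :
    HasSum (fun j : ℕ ↦ (m.choose j - (-1) ^ j) * (x ^ j / ((2 * j + 1 : ℕ) : ℚ_[p])))
      (binomialIntegral x m - ∑' j : ℕ, (-x) ^ j / (2 * j + 1)) := by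
  have summable := summable_pow_div_two_mul_add_one ((norm_neg x).trans_lt hx)
  refine ((hasSum_binomialIntegral x m).sub summable.hasSum).congr_fun fun j ↦ ?_
  rw [neg_pow x]
  push_cast
  ring

-- The term `j = 1` is split off because for `p = 3` its norm can reach `‖m + 1‖`.
theorem norm_binomialIntegral_sub_tsum_sub_le (hp : 3 ≤ p) {x : ℚ_[p]} (hx : ‖x‖ < 1)
    (m : ℕ) :
    ‖binomialIntegral x m - ∑' j : ℕ, (-x) ^ j / (2 * j + 1) - (m + 1) * (x / 3)‖ ≤
      ‖(m + 1 : ℚ_[p])‖ * (p : ℝ)⁻¹ := by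
  have hasSum := hasSum_choose_sub_neg_one_pow_mul hx m
  have head : ∑ j ∈ range 2, (m.choose j - (-1) ^ j) * (x ^ j / ((2 * j + 1 : ℕ) : ℚ_[p])) =
      (m + 1) * (x / 3) := by
    norm_num [sum_range_succ]
  rw [← hasSum.tsum_eq, ← hasSum.summable.sum_add_tsum_nat_add 2, head, add_sub_cancel_left]
  refine IsUltrametricDist.norm_tsum_le_of_forall_le_of_nonneg (by positivity) fun j ↦ ?_
  simpa only [pow_one] using norm_choose_sub_neg_one_pow_mul_le hx m (e := 1)
    (log_add_log_two_mul_add_one_lt hp (Nat.le_add_left 2 j))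

end Padic

section Three

theorem norm_three : ‖(3 : ℚ_[3])‖ = 3⁻¹ := by
  exact_mod_cast Padic.norm_p (p := 3)

theorem tsum_neg_three_pow_div_eq_zero : ∑' j : ℕ, (-3 : ℚ_[3]) ^ j / (2 * j + 1) = 0 := by
  have norm_le (k : ℕ) : ‖∑' j : ℕ, (-3 : ℚ_[3]) ^ j / (2 * j + 1)‖ ≤ (3⁻¹ : ℝ) ^ (k + 1) := by
    obtain ⟨m, hm⟩ := Nat.exists_eq_succ_of_ne_zero (pow_ne_zero (k + 1) three_ne_zero)
    have close := norm_sum_choose_two_mul_sub_tsum_le le_rfl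
      ((norm_neg 3).trans_lt Padic.norm_p_lt_one) m
    rw [sum_choose_two_mul_mul_neg_three_pow_div (hm.subst (dvd_pow_self 3 k.succ_ne_zero)),
      zero_sub, norm_neg, ← Nat.cast_succ, ← hm, Nat.cast_pow, norm_pow, Nat.cast_ofNat, norm_three]
      at close
    exact close
  have tendsto_zero : Filter.Tendsto (fun k ↦ (3⁻¹ : ℝ) ^ (k + 1)) Filter.atTop (nhds 0) :=
    (Filter.tendsto_add_atTop_iff_nat 1).2
      (tendsto_pow_atTop_nhds_zero_of_lt_one (by norm_num) (by norm_num))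
  exact norm_le_zero_iff.1 (ge_of_tendsto' tendsto_zero norm_le)

theorem norm_binomialIntegral_three (m : ℕ) :
    ‖binomialIntegral (3 : ℚ_[3]) m‖ = ‖(m + 1 : ℚ_[3])‖ := by
  have close := norm_binomialIntegral_sub_tsum_sub_le le_rfl Padic.norm_p_lt_one m
  simp only [Nat.cast_ofNat, tsum_neg_three_pow_div_eq_zero, sub_zero,
    div_self (three_ne_zero : (3 : ℚ_[3]) ≠ 0), mul_one] at close
  have norm_pos : 0 < ‖(m + 1 : ℚ_[3])‖ := norm_pos_iff.2 (by exact_mod_cast m.succ_ne_zero)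
  exact Padic.norm_eq_of_norm_sub_lt_right (close.trans_lt (by linarith))

theorem norm_sum_centralBinom (n : ℕ) :
    ‖((∑ k ∈ range n, k.centralBinom : ℕ) : ℚ_[3])‖ = ‖((n ^ 2 * n.centralBinom : ℕ) : ℚ_[3])‖ := by
  rcases n with _ | m
  · simp
  have norm_eq := congrArg norm (sum_centralBinom_mul_pow (3 : ℚ_[3]) m)
  have norm_two : ‖(2 : ℚ_[3])‖ = 1 := by
    exact_mod_cast (Padic.norm_natCast_eq_one_iff (p := 3) (n := 2)).2 (by norm_num)
  have norm_four : ‖(4 : ℚ_[3])‖ = 1 := by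
    exact_mod_cast (Padic.norm_natCast_eq_one_iff (p := 3) (n := 4)).2 (by norm_num)
  have ratio : (1 + 3 : ℚ_[3]) / 4 = 1 := by norm_num
  simp only [ratio, one_pow, mul_one, norm_mul, norm_pow, norm_two, norm_four, one_mul,
    norm_binomialIntegral_three] at norm_eq
  push_cast
  rw [norm_eq, norm_mul, norm_pow]
  ring

end Three

/-- For every positive integer `n`, the 3-adic valuation of `∑_{k=0}^{n-1} C(2k,k)`
equals the 3-adic valuation of `n² · C(2n,n)`. -/
theorem stmt_0 (n : ℕ) (hn : 0 < n) :
    padicValNat 3 (∑ k ∈ Finset.range n, Nat.choose (2 * k) k) =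
      padicValNat 3 (n ^ 2 * Nat.choose (2 * n) n) := by
  simp only [← Nat.centralBinom_eq_two_mul_choose]
  have sum_ne_zero : ∑ k ∈ range n, k.centralBinom ≠ 0 :=
    (sum_pos (fun k _ ↦ k.centralBinom_pos) (nonempty_range_iff.2 hn.ne')).ne'
  exact padicValNat_eq_of_norm_eq sum_ne_zero
    (mul_ne_zero (pow_ne_zero 2 hn.ne') n.centralBinom_ne_zero) (norm_sum_centralBinom n)
end

section
/- In ℚ₃, the series b₁(-3) = ∑_{k≥1} (-1)^{k-1}(-3)^{k-1}/(k · C(2k,k)) = ∑_{k≥1} 3^{k-1}/(k · C(2k,k)) converges and equals 0. -/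
/-!
The idea is to interpolate Chebyshev polynomials `p`-adically. Expanding around `2`,
`S_{N-1}(2 + x) = ∑ⱼ C(N + j, 2j + 1) xʲ`, and the `j`-th summand is `2N` times the `j`-th term of
`b₁(x)` times the weight `∏_{1 ≤ i ≤ j} (1 - N² / i²)`. The weight is a continuous function of
`N ∈ ℤ_p` with values in `ℤ_p` and is `1` at `N = 0`, so for `‖x‖ < 1` the function
`N ↦ S_{N-1}(2 + x) / (2N)` extends continuously to `ℤ_p`, with value `b₁(x)` at `0`. If `2 + x` is
a root of `S_{N-1}`, it is a root of every `S_{N pᵏ - 1}`; as `N pᵏ → 0`, this forces `b₁(x) = 0`.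
For `x = -3` and `p = 3`, take `N = 3`: `S₂(-1) = 0`.

Since `S_{N-1}(ζ + ζ⁻¹) = (ζᴺ - ζ⁻ᴺ) / (ζ - ζ⁻¹)`, this is the evaluation of
`b₁((w - w⁻¹)²) = log(w²) / (w² - w⁻²)` at a root of unity `w² = ζ`, without leaving the field
that contains `x`.
-/

open Filter Topology Polynomial

section Chebyshev

variable {R : Type*} [CommRing R]

lemma add_two_add_choose_eq (n j : ℕ) :
    ((n + 2 + (j + 1)).choose (2 * (j + 1) + 1) : R) =
      2 * (n + 1 + (j + 1)).choose (2 * (j + 1) + 1) - (n + (j + 1)).choose (2 * (j + 1) + 1) +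
        (n + 1 + j).choose (2 * j + 1) := by
  rw [show n + 2 + (j + 1) = (n + 1 + j) + 1 + 1 by ring,
    show n + 1 + (j + 1) = (n + 1 + j) + 1 by ring, show n + (j + 1) = n + 1 + j by ring,
    show 2 * (j + 1) + 1 = (2 * j + 1) + 1 + 1 by ring]
  simp only [Nat.choose_succ_succ', Nat.cast_add]
  ring

lemma sum_add_two_add_choose_mul_pow (x : R) {n m : ℕ} (hnm : n + 2 ≤ m) :
    ∑ j ∈ Finset.range m, ((n + 2 + j).choose (2 * j + 1) : R) * x ^ j =
      (2 + x) * (∑ j ∈ Finset.range m, ((n + 1 + j).choose (2 * j + 1) : R) * x ^ j) -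
        ∑ j ∈ Finset.range m, ((n + j).choose (2 * j + 1) : R) * x ^ j := by
  obtain ⟨m, rfl⟩ : ∃ k, m = k + 1 := ⟨m - 1, by lia⟩
  have htop : ∑ j ∈ Finset.range (m + 1), ((n + 1 + j).choose (2 * j + 1) : R) * x ^ j =
      ∑ j ∈ Finset.range m, ((n + 1 + j).choose (2 * j + 1) : R) * x ^ j := by
    rw [Finset.sum_range_succ, Nat.choose_eq_zero_of_lt (by lia), Nat.cast_zero, zero_mul,
      add_zero]
  rw [add_mul]
  nth_rw 2 [htop]
  simp only [Finset.sum_range_succ', Finset.mul_sum]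
  simp only [add_two_add_choose_eq, add_mul, sub_mul, Finset.sum_add_distrib,
    Finset.sum_sub_distrib, pow_succ', mul_assoc, mul_left_comm x]
  simp only [← Finset.mul_sum, add_zero, mul_zero, zero_add, Nat.choose_one_right, Nat.cast_add,
    Nat.cast_ofNat, pow_zero, mul_one, Nat.cast_one]
  ring

lemma chebyshevS_sub_one_eval_two_add_of_le (x : R) {n m : ℕ} (hnm : n ≤ m) :
    (Chebyshev.S R (n - 1)).eval (2 + x) =
      ∑ j ∈ Finset.range m, ((n + j).choose (2 * j + 1) : R) * x ^ j := by
  induction n using Nat.twoStepInduction with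
  | zero =>
    rw [Finset.sum_eq_zero fun j _ => by
      rw [Nat.choose_eq_zero_of_lt (by lia), Nat.cast_zero, zero_mul]]
    simp
  | one =>
    rw [Finset.sum_eq_single_of_mem 0 (Finset.mem_range.mpr hnm) fun j _ hj => by
      rw [Nat.choose_eq_zero_of_lt (by lia), Nat.cast_zero, zero_mul]]
    simp
  | more n ih ih' =>
    specialize ih (by lia)
    specialize ih' (by lia)
    have hS := Chebyshev.S_add_one R (n : ℤ)
    rw [sum_add_two_add_choose_mul_pow x hnm, ← ih, ← ih']
    push_cast
    rw [show (n : ℤ) + 2 - 1 = n + 1 by ring, add_sub_cancel_right, hS, eval_sub, eval_mul,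
      eval_X]

theorem chebyshevS_sub_one_eval_two_add (x : R) (n : ℕ) :
    (Chebyshev.S R (n - 1)).eval (2 + x) =
      ∑ j ∈ Finset.range n, ((n + j).choose (2 * j + 1) : R) * x ^ j :=
  chebyshevS_sub_one_eval_two_add_of_le x le_rfl

variable (R) in
theorem chebyshevS_add (m n : ℤ) :
    Chebyshev.S R (m + n) =
      Chebyshev.S R m * Chebyshev.S R n - Chebyshev.S R (m - 1) * Chebyshev.S R (n - 1) := by
  induction n using Chebyshev.induct with
  | zero => simp
  | one => simp [Chebyshev.S_add_one, mul_comm]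
  | add_two n ih ih' =>
    have h₁ := Chebyshev.S_add_two R (m + n)
    have h₂ := Chebyshev.S_add_two R n
    have h₃ := Chebyshev.S_add_one R n
    linear_combination (norm := ring_nf) h₁ + X * ih - ih' - Chebyshev.S R m * h₂ +
      Chebyshev.S R (m - 1) * h₃
  | neg_add_one n ih ih' =>
    have h₁ := Chebyshev.S_sub_one R (m - n)
    have h₂ := Chebyshev.S_sub_one R (-n)
    have h₃ := Chebyshev.S_sub_two R (-n)
    linear_combination (norm := ring_nf) h₁ + X * ih - ih' - Chebyshev.S R m * h₂ +
      Chebyshev.S R (m - 1) * h₃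

variable (R) in
theorem chebyshevS_sub_one_dvd_chebyshevS_mul_sub_one (n : ℤ) (k : ℕ) :
    Chebyshev.S R (n - 1) ∣ Chebyshev.S R (n * k - 1) := by
  induction k with
  | zero => simp
  | succ k ih =>
    have h := chebyshevS_add R (n * k - 1) n
    rw [show n * (k + 1 : ℕ) - 1 = n * k - 1 + n by push_cast; ring, h]
    exact dvd_sub (ih.mul_right _) (dvd_mul_left _ _)

end Chebyshev

section ChebyshevWeight

variable {R : Type*} [CommRing R] [BinomialRing R]

/-- The product `∏_{1 ≤ i ≤ j} (1 - r² / i²)`, written as `C(j + r, j) * C(j - r, j)` so that it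
makes sense in every binomial ring. -/
noncomputable def chebyshevWeight (r : R) (j : ℕ) : R :=
  Ring.choose (j + r) j * Ring.choose (j - r) j

lemma chebyshevWeight_zero (j : ℕ) : chebyshevWeight (0 : R) j = 1 := by
  simp [chebyshevWeight, Ring.choose_natCast]

lemma choose_natCast_sub (r : R) (j : ℕ) :
    Ring.choose (j - r) j = (-1) ^ j * Ring.choose (r - 1) j := by
  have h := Ring.choose_neg (r - j) j
  rw [neg_sub, sub_add_cancel] at h
  rw [h]
  simp [Int.negOnePow_def, Units.smul_def]

lemma succ_mul_choose_succ (r : R) (j : ℕ) :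
    (j + 1) * Ring.choose r (j + 1) = r * Ring.choose (r - 1) j := by
  simpa using Ring.choose_smul_choose r (Nat.le_add_left 1 j)

lemma two_mul_choose_eq_centralBinom (j : ℕ) :
    2 * (2 * j + 1).choose j = (j + 1).centralBinom := by
  rw [Nat.centralBinom_eq_two_mul_choose, mul_add_one, Nat.choose_succ_succ', Nat.choose_symm_half,
    two_mul]

theorem two_mul_mul_chebyshevWeight (r : R) (j : ℕ) :
    2 * r * chebyshevWeight r j =
      (-1) ^ j * (j + 1) * (j + 1).centralBinom * Ring.choose (r + j) (2 * j + 1) := by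
  have h := Ring.choose_add_smul_choose r (j + 1) j
  rw [show j + 1 + j = 2 * j + 1 by ring, nsmul_eq_mul] at h
  calc 2 * r * chebyshevWeight r j
      = 2 * (-1) ^ j * Ring.choose (r + j) j * (r * Ring.choose (r - 1) j) := by
        rw [chebyshevWeight, choose_natCast_sub, add_comm (j : R)]; ring
    _ = 2 * (-1) ^ j * (j + 1) * (Ring.choose (r + j) j * Ring.choose r (j + 1)) := by
        rw [← succ_mul_choose_succ]; ring
    _ = (-1) ^ j * (j + 1) * (j + 1).centralBinom * Ring.choose (r + j) (2 * j + 1) := by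
        rw [← h, ← two_mul_choose_eq_centralBinom]; push_cast; ring

end ChebyshevWeight

section Padic

variable {p : ℕ} [Fact p.Prime]

lemma continuous_chebyshevWeight (j : ℕ) :
    Continuous fun r : ℤ_[p] => chebyshevWeight r j := by
  unfold chebyshevWeight
  fun_prop

lemma inv_norm_natCast_eq_pow_factorization {n : ℕ} (hn : n ≠ 0) :
    ‖(n : ℚ_[p])‖⁻¹ = p ^ n.factorization p := by
  rw [Padic.norm_eq_zpow_neg_valuation (mod_cast hn), Padic.valuation_natCast, ← zpow_neg, neg_neg,
    zpow_natCast, Nat.factorization_def _ Fact.out]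

lemma inv_norm_natCast_le {n : ℕ} (hn : n ≠ 0) : ‖(n : ℚ_[p])‖⁻¹ ≤ n := by
  rw [inv_norm_natCast_eq_pow_factorization hn]
  exact_mod_cast Nat.ordProj_le p hn

lemma inv_norm_centralBinom_le {n : ℕ} (hn : n ≠ 0) :
    ‖(n.centralBinom : ℚ_[p])‖⁻¹ ≤ 2 * n := by
  rw [inv_norm_natCast_eq_pow_factorization n.centralBinom_ne_zero]
  exact_mod_cast Nat.pow_factorization_choose_le (by lia)

end Padic

lemma summable_two_mul_succ_sq_mul_geometric {r : ℝ} (hr₀ : 0 ≤ r) (hr₁ : r < 1) :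
    Summable fun k : ℕ => 2 * ((k : ℝ) + 1) ^ 2 * r ^ k := by
  have h (i : ℕ) := summable_pow_mul_geometric_of_norm_lt_one i
    (show ‖r‖ < 1 by rwa [Real.norm_of_nonneg hr₀])
  exact ((((h 2).mul_left 2).add ((h 1).mul_left 4)).add ((h 0).mul_left 2)).congr fun k => by ring

/-- The terms of the series `b₁(x) = ∑_{k ≥ 1} (-1)^(k-1) x^(k-1) / (k * C(2k, k))`, indexed from
`0`. -/
def bOneTerm {K : Type*} [Field K] (x : K) (k : ℕ) : K :=
  (-x) ^ k / ((k + 1) * (k + 1).centralBinom)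

lemma norm_bOneTerm_le (p : ℕ) [Fact p.Prime] {K : Type*} [NormedField K] [NormedAlgebra ℚ_[p] K]
    (x : K) (k : ℕ) : ‖bOneTerm x k‖ ≤ 2 * (k + 1) ^ 2 * ‖x‖ ^ k := by
  have hcast (n : ℕ) : ‖(n : K)‖ = ‖(n : ℚ_[p])‖ := by
    rw [← map_natCast (algebraMap ℚ_[p] K), norm_algebraMap']
  calc ‖bOneTerm x k‖
      = ‖((k + 1 : ℕ) : ℚ_[p])‖⁻¹ * ‖((k + 1).centralBinom : ℚ_[p])‖⁻¹ * ‖x‖ ^ k := by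
        rw [← hcast, ← hcast, bOneTerm, norm_div, norm_mul, norm_pow, norm_neg]
        push_cast
        ring
    _ ≤ (k + 1 : ℕ) * (2 * (k + 1 : ℕ)) * ‖x‖ ^ k := by
        gcongr
        · exact inv_norm_natCast_le k.succ_ne_zero
        · exact inv_norm_centralBinom_le k.succ_ne_zero
    _ = 2 * (k + 1) ^ 2 * ‖x‖ ^ k := by push_cast; ring

lemma summable_bOneTerm (p : ℕ) [Fact p.Prime] {K : Type*} [NormedField K] [NormedAlgebra ℚ_[p] K]
    [CompleteSpace K] {x : K} (hx : ‖x‖ < 1) : Summable (bOneTerm x) :=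
  .of_norm_bounded (summable_two_mul_succ_sq_mul_geometric (norm_nonneg x) hx)
    (norm_bOneTerm_le p x)

section Interpolation

variable {p : ℕ} [Fact p.Prime] {K : Type*} [NormedField K] [NormedAlgebra ℚ_[p] K]

/-- The series `b₁(x)` with its `j`-th term weighted by `∏_{1 ≤ i ≤ j} (1 - r² / i²)`: the
continuous function on `ℤ_p` that interpolates `N ↦ S_{N-1}(2 + x) / (2N)`. -/
noncomputable def chebyshevInterpolation (x : K) (r : ℤ_[p]) : K :=
  ∑' j, ((chebyshevWeight r j : ℤ_[p]) : ℚ_[p]) • bOneTerm x j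

lemma chebyshevInterpolation_zero (x : K) :
    chebyshevInterpolation x (0 : ℤ_[p]) = ∑' j, bOneTerm x j := by
  simp [chebyshevInterpolation, chebyshevWeight_zero]

theorem continuous_chebyshevInterpolation [CompleteSpace K] {x : K} (hx : ‖x‖ < 1) :
    Continuous (chebyshevInterpolation x : ℤ_[p] → K) := by
  refine continuous_tsum
    (fun j => (continuous_subtype_val.comp (continuous_chebyshevWeight j)).smul continuous_const)
    (summable_two_mul_succ_sq_mul_geometric (norm_nonneg x) hx) fun j r => ?_
  rw [norm_smul]
  exact (mul_le_of_le_one_left (norm_nonneg _) (PadicInt.norm_le_one _)).trans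
    (norm_bOneTerm_le p x j)

lemma two_mul_natCast_mul_chebyshevWeight_smul_bOneTerm (x : K) (n j : ℕ) :
    2 * n * (((chebyshevWeight (n : ℤ_[p]) j : ℤ_[p]) : ℚ_[p]) • bOneTerm x j) =
      (n + j).choose (2 * j + 1) * x ^ j := by
  have : CharZero K := charZero_of_injective_algebraMap (algebraMap ℚ_[p] K).injective
  let φ : ℤ_[p] →+* K := (algebraMap ℚ_[p] K).comp PadicInt.Coe.ringHom
  have hweight : 2 * n * φ (chebyshevWeight n j) =
      (-1) ^ j * (j + 1) * (j + 1).centralBinom * (n + j).choose (2 * j + 1) := by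
    have h := two_mul_mul_chebyshevWeight (n : ℤ_[p]) j
    rw [← Nat.cast_add, Ring.choose_natCast] at h
    simpa only [map_mul, map_pow, map_neg, map_add, map_one, map_ofNat, map_natCast]
      using congrArg φ h
  have hsucc : (j + 1 : K) ≠ 0 := j.cast_add_one_ne_zero
  have hcentral : ((j + 1).centralBinom : K) ≠ 0 := mod_cast (j + 1).centralBinom_ne_zero
  have hsign : (-1) ^ j * (-x) ^ j = x ^ j := by rw [← mul_pow, neg_one_mul, neg_neg]
  calc 2 * n * (((chebyshevWeight (n : ℤ_[p]) j : ℤ_[p]) : ℚ_[p]) • bOneTerm x j)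
      = 2 * n * φ (chebyshevWeight n j) * bOneTerm x j := by
        rw [Algebra.smul_def, ← mul_assoc]; rfl
    _ = (n + j).choose (2 * j + 1) * ((-1) ^ j * (-x) ^ j) := by
        rw [hweight, bOneTerm]; field_simp
    _ = (n + j).choose (2 * j + 1) * x ^ j := by rw [hsign]

theorem two_mul_natCast_mul_chebyshevInterpolation (x : K) (n : ℕ) :
    2 * n * chebyshevInterpolation x (n : ℤ_[p]) = (Chebyshev.S K (n - 1)).eval (2 + x) := by
  rw [chebyshevInterpolation, ← tsum_mul_left, chebyshevS_sub_one_eval_two_add]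
  simp only [two_mul_natCast_mul_chebyshevWeight_smul_bOneTerm]
  refine tsum_eq_sum fun j hj => ?_
  rw [Finset.mem_range, not_lt] at hj
  rw [Nat.choose_eq_zero_of_lt (by lia), Nat.cast_zero, zero_mul]

lemma chebyshevInterpolation_eq_zero_of_eval_eq_zero {x : K} {n : ℕ} (hn : n ≠ 0)
    (h : (Chebyshev.S K (n - 1)).eval (2 + x) = 0) :
    chebyshevInterpolation x (n : ℤ_[p]) = 0 := by
  have : CharZero K := charZero_of_injective_algebraMap (algebraMap ℚ_[p] K).injective
  rw [← two_mul_natCast_mul_chebyshevInterpolation (p := p)] at h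
  exact (mul_eq_zero_iff_left (by simpa using hn)).mp h

end Interpolation

theorem stmt_7_general {p : ℕ} [Fact p.Prime] {K : Type*} [NormedField K] [NormedAlgebra ℚ_[p] K]
    [CompleteSpace K] {x : K} (hx : ‖x‖ < 1) {n : ℕ} (hn : n ≠ 0)
    (hroot : (Chebyshev.S K (n - 1)).eval (2 + x) = 0) : HasSum (bOneTerm x) 0 := by
  have hlim : Tendsto (fun k : ℕ => ((n * p ^ k : ℕ) : ℤ_[p])) atTop (𝓝 0) := by
    have hp : ‖(p : ℤ_[p])‖ < 1 := Padic.norm_p_lt_one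
    simpa using (tendsto_pow_atTop_nhds_zero_of_norm_lt_one hp).const_mul (n : ℤ_[p])
  have hzero (k : ℕ) : chebyshevInterpolation x ((n * p ^ k : ℕ) : ℤ_[p]) = 0 := by
    refine chebyshevInterpolation_eq_zero_of_eval_eq_zero
      (mul_ne_zero hn (pow_ne_zero k (Fact.out : p.Prime).ne_zero)) ?_
    have hdvd := chebyshevS_sub_one_dvd_chebyshevS_mul_sub_one K n (p ^ k)
    exact eval_eq_zero_of_dvd_of_eval_eq_zero (mod_cast hdvd) hroot
  have htsum : ∑' k, bOneTerm x k = 0 := by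
    rw [← chebyshevInterpolation_zero (p := p)]
    refine tendsto_nhds_unique
      (((continuous_chebyshevInterpolation hx).tendsto 0).comp hlim) ?_
    simpa only [Function.comp_def, hzero] using tendsto_const_nhds
  exact htsum ▸ (summable_bOneTerm p hx).hasSum

/-- In `ℚ₃`, the series `b₁(-3) = ∑_{k≥1} 3^{k-1}/(k · C(2k,k))` converges and equals `0`. -/
theorem stmt_7 :
    Summable (fun k : ℕ => (3 : ℚ_[3]) ^ k /
        ((k + 1 : ℚ_[3]) * (Nat.choose (2 * (k + 1)) (k + 1) : ℚ_[3]))) ∧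
      ∑' k : ℕ, (3 : ℚ_[3]) ^ k /
        ((k + 1 : ℚ_[3]) * (Nat.choose (2 * (k + 1)) (k + 1) : ℚ_[3])) = 0 := by
  have hnorm : ‖(-3 : ℚ_[3])‖ < 1 := by simpa using Padic.norm_p_lt_one (p := 3)
  have hroot : (Chebyshev.S ℚ_[3] ((3 : ℕ) - 1)).eval (2 + -3) = 0 := by norm_num [Chebyshev.S_two]
  have h : HasSum (bOneTerm (-3 : ℚ_[3])) 0 := stmt_7_general (p := 3) hnorm three_ne_zero hroot
  unfold bOneTerm at h
  rw [neg_neg] at h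
  exact ⟨h.summable, h.tsum_eq⟩
end

section
/- In ℚ₅, the series b₂(-5) converges and equals 0, where b₂(t) is the coefficient of x² in ∑_{k≥1} t^{k-1} C(x,k)/C(2k,k), i.e. b₂(t) = ∑_{k≥1} t^{k-1} e_{k}/C(2k,k) with e_k = (-1)^k/k! · (coefficient of x² in x(x-1)⋯(x-k+1)) = (-1)^{k-1} H_{k-1}/k where H_{k-1} = ∑_{j=1}^{k-1} 1/j. Thus ∑_{k≥2} (-1)^{k-1} (-5)^{k-1} H_{k-1} / (k · C(2k,k)) = 0 in ℚ₅. -/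
instance : Fact (Nat.Prime 5) := ⟨by norm_num⟩

/-!
The normalised integral of `((5 - x²) / 4) ^ n` over `[-√5, √5]` is `5 ^ n / ((2n + 1) C(2n, n))`,
so `T = ∑ H_n 5 ^ n / ((2n + 1) C(2n, n))` is the integral of `-η⁻¹ log η dx`, where
`η = 1 - (5 - x²) / 4`. Any `e ≡ x` modulo `x² - 5` may replace `x`. If moreover
`de = η dl + c e de` with `c` constant, then, as `e de = 2 dη`, integration by parts gives
`T = ∫ l dlog η`.

With `u = 1 - x`, `v = 6 - 2x` and `w = -(1 + x) / 4`, this applies with the same `l = 4 log u` to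
`e = x`, `-1 - 4 / u` and `-1 - 4 / (v w)`, for which `η` is `u w`, `v / u²` and `(u / (v w))²`.
Since `(u w)² (v / u²)² (u / (v w))² = 1`, adding up gives `5 T = 0`.

The `5`-adic integral lives on the completion of `ℚ₅[x]` for the Gauss norm of radius `1 / 2`: it is
bounded because `|5| < 1 / 4`, and the logarithms converge because `1 / 2 < 1`.
-/

section PadicBounds

variable {p : ℕ} [Fact p.Prime]

theorem padic_norm_inv_natCast_le (n : ℕ) : ‖(n : ℚ_[p])⁻¹‖ ≤ n := by
  rcases eq_or_ne n 0 with rfl | hn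
  · simp
  · have hdvd : p ^ padicValNat p n ≤ n :=
      Nat.le_of_dvd (Nat.pos_of_ne_zero hn) pow_padicValNat_dvd
    rw [norm_inv, Padic.norm_eq_zpow_neg_valuation (Nat.cast_ne_zero.2 hn), zpow_neg, inv_inv,
      Padic.valuation_natCast, zpow_natCast]
    exact_mod_cast hdvd

theorem padic_norm_harmonic_le (n : ℕ) : ‖((harmonic n : ℚ) : ℚ_[p])‖ ≤ n := by
  rw [harmonic, Rat.cast_sum]
  refine IsUltrametricDist.norm_sum_le_of_forall_le_of_nonneg n.cast_nonneg fun i hi => ?_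
  have hin : ((i + 1 : ℕ) : ℝ) ≤ n := by exact_mod_cast Finset.mem_range.1 hi
  rw [Rat.cast_inv, Rat.cast_natCast]
  exact (padic_norm_inv_natCast_le (i + 1)).trans hin

end PadicBounds

theorem summable_smul_pow {K R : Type*} [NormedField K] [NormedRing R] [NormedAlgebra K R]
    [CompleteSpace R] {c : ℕ → K} (hc : ∀ n, ‖c n‖ ≤ n + 1) {z : R} (hz : ‖z‖ < 1) :
    Summable fun n => c n • z ^ n := by
  have hlin : Summable fun n : ℕ => (n : ℝ) * ‖z‖ ^ n := by
    simpa using summable_pow_mul_geometric_of_norm_lt_one 1 (r := ‖z‖) (by simpa using hz)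
  have hbound : Summable fun n : ℕ => ((n : ℝ) + 1) * ‖z‖ ^ n := by
    simpa only [add_mul, one_mul] using
      hlin.add (summable_geometric_of_lt_one (norm_nonneg z) hz)
  refine .of_norm_bounded_eventually_nat hbound ?_
  filter_upwards [Filter.eventually_gt_atTop 0] with n hn
  calc ‖c n • z ^ n‖ ≤ ‖c n‖ * ‖z ^ n‖ := norm_smul_le _ _
    _ ≤ (n + 1) * ‖z‖ ^ n := by gcongr; exacts [hc n, norm_pow_le' z hn]

/-- The units `u` with `‖1 - u‖ < 1`. -/
def principalUnits (R : Type*) [NormedRing R] [IsUltrametricDist R] : Subgroup Rˣ where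
  carrier := {u | ‖1 - (u : R)‖ < 1}
  one_mem' := by simp
  mul_mem' {u v} hu hv := by
    have hsplit : 1 - ((u * v : Rˣ) : R) = (1 - u) + (1 - v) + (1 - u) * ((v : R) - 1) := by
      push_cast; noncomm_ring
    have hv' : ‖(v : R) - 1‖ < 1 := norm_sub_rev (v : R) 1 ▸ hv
    have hmul : ‖(1 - (u : R)) * (v - 1)‖ < 1 :=
      (norm_mul_le _ _).trans_lt (mul_lt_one_of_nonneg_of_lt_one_left (norm_nonneg _) hu hv'.le)
    rw [Set.mem_ofPred_eq, hsplit]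
    exact (IsUltrametricDist.norm_add_le_max _ _).trans_lt
      (max_lt ((IsUltrametricDist.norm_add_le_max _ _).trans_lt (max_lt hu hv)) hmul)
  inv_mem' {u} hu := by
    have hsplit : 1 - ((u⁻¹ : Rˣ) : R) = (1 - u) * (1 - ((u⁻¹ : Rˣ) : R)) + ((u : R) - 1) := by
      rw [sub_mul, mul_sub, mul_sub, u.mul_inv]; noncomm_ring
    have hu' : ‖(u : R) - 1‖ < 1 := norm_sub_rev (u : R) 1 ▸ hu
    by_contra hinv
    have hone : 1 ≤ ‖1 - ((u⁻¹ : Rˣ) : R)‖ := not_lt.1 hinv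
    have hmul : ‖(1 - (u : R)) * (1 - ((u⁻¹ : Rˣ) : R))‖ < ‖1 - ((u⁻¹ : Rˣ) : R)‖ :=
      (norm_mul_le _ _).trans_lt (mul_lt_of_lt_one_left (zero_lt_one.trans_le hone) hu)
    refine lt_irrefl ‖1 - ((u⁻¹ : Rˣ) : R)‖ ?_
    conv_lhs => rw [hsplit]
    exact (IsUltrametricDist.norm_add_le_max _ _).trans_lt (max_lt hmul (hu'.trans_le hone))

theorem mem_principalUnits {R : Type*} [NormedRing R] [IsUltrametricDist R] {u : Rˣ} :
    u ∈ principalUnits R ↔ ‖1 - (u : R)‖ < 1 :=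
  Iff.rfl

section LogDerivative

variable {K R : Type*} [CommRing K] [CommRing R] [Algebra K R] (D : Derivation K R R)

theorem derivation_ofNat (n : ℕ) [n.AtLeastTwo] : D (OfNat.ofNat n) = 0 := by
  exact_mod_cast D.map_natCast n

theorem derivation_ofNat_mul (n : ℕ) [n.AtLeastTwo] (f : R) :
    D (OfNat.ofNat n * f) = OfNat.ofNat n * D f := by
  rw [D.leibniz, derivation_ofNat, smul_zero, add_zero, smul_eq_mul]

theorem derivation_units_inv (u : Rˣ) : D ↑u⁻¹ = -(↑u⁻¹ ^ 2 * D u) := by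
  rw [D.leibniz_of_mul_eq_one u.inv_mul, smul_eq_mul, neg_mul]

/-- The logarithmic derivative `u⁻¹ D u` of a unit. -/
def logDerivative (u : Rˣ) : R := ↑u⁻¹ * D u

theorem logDerivative_mul (u v : Rˣ) :
    logDerivative D (u * v) = logDerivative D u + logDerivative D v := by
  simp only [logDerivative, mul_inv, Units.val_mul, D.leibniz, smul_eq_mul]
  linear_combination (↑v⁻¹ * D v) * u.inv_mul + (↑u⁻¹ * D u) * v.inv_mul

theorem logDerivative_sq (u : Rˣ) : logDerivative D (u ^ 2) = 2 * logDerivative D u := by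
  rw [pow_two, logDerivative_mul, two_mul]

theorem logDerivative_inv (u : Rˣ) : logDerivative D u⁻¹ = -logDerivative D u := by
  rw [logDerivative, inv_inv, derivation_units_inv, logDerivative]
  linear_combination (-(↑u⁻¹ * D u)) * u.mul_inv

end LogDerivative

section PadicLog

variable (p : ℕ) [Fact p.Prime] {R : Type*} [NormedCommRing R] [NormedAlgebra ℚ_[p] R]

/-- The `p`-adic logarithm `log X = -∑ (1 - X) ^ (n + 1) / (n + 1)`, meaningful when
`‖1 - X‖ < 1`. -/
noncomputable def padicLog (X : R) : R :=
  -∑' n : ℕ, ((n + 1 : ℕ) : ℚ_[p])⁻¹ • (1 - X) ^ (n + 1)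

variable [CompleteSpace R] {X : R}

theorem summable_inv_smul_pow {z : R} (hz : ‖z‖ < 1) :
    Summable fun n : ℕ => ((n + 1 : ℕ) : ℚ_[p])⁻¹ • z ^ n :=
  summable_smul_pow (fun n => by exact_mod_cast padic_norm_inv_natCast_le (n + 1)) hz

theorem hasSum_padicLog (hX : ‖1 - X‖ < 1) :
    HasSum (fun n : ℕ => ((n + 1 : ℕ) : ℚ_[p])⁻¹ • (1 - X) ^ (n + 1)) (-padicLog p X) := by
  rw [padicLog, neg_neg]
  simpa only [mul_smul_comm, ← pow_succ'] using
    ((summable_inv_smul_pow p hX).mul_left (1 - X)).hasSum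

theorem one_sub_dvd_padicLog (hX : ‖1 - X‖ < 1) : 1 - X ∣ padicLog p X := by
  refine ⟨-∑' n : ℕ, ((n + 1 : ℕ) : ℚ_[p])⁻¹ • (1 - X) ^ n, ?_⟩
  rw [padicLog, mul_neg, ← (summable_inv_smul_pow p hX).tsum_mul_left]
  simp only [mul_smul_comm, ← pow_succ']

theorem deriv_padicLog {D : Derivation ℚ_[p] R R} (hD : Continuous D) {u : Rˣ}
    (hu : ‖1 - (u : R)‖ < 1) : D (padicLog p (u : R)) = logDerivative D u := by
  have hgeom : HasSum (fun n : ℕ => (1 - (u : R)) ^ n) ↑u⁻¹ := by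
    simpa using hasSum_geom_series_inverse _ hu
  have hterm (n : ℕ) : D (((n + 1 : ℕ) : ℚ_[p])⁻¹ • (1 - (u : R)) ^ (n + 1)) =
      -((1 - (u : R)) ^ n * D u) := by
    rw [D.map_smul, D.leibniz_pow, Nat.add_sub_cancel, map_sub, D.map_one_eq_zero, zero_sub,
      smul_neg, smul_neg, smul_neg, ← Nat.cast_smul_eq_nsmul ℚ_[p],
      inv_smul_smul₀ (Nat.cast_ne_zero.2 n.succ_ne_zero), smul_eq_mul]
  have hlog := (hasSum_padicLog p hu).map D hD
  simp only [Function.comp_def, hterm, map_neg] at hlog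
  exact neg_injective (hlog.unique (hgeom.mul_right (D u)).neg)

theorem hasSum_harmonic_smul_pow {u : Rˣ} (hu : ‖1 - (u : R)‖ < 1) :
    HasSum (fun n : ℕ => ((harmonic n : ℚ) : ℚ_[p]) • (1 - (u : R)) ^ n)
      (-(↑u⁻¹ * padicLog p (u : R))) := by
  have hsum := (summable_smul_pow (c := fun n => ((harmonic n : ℚ) : ℚ_[p]))
    (fun n => (padic_norm_harmonic_le n).trans (le_add_of_nonneg_right zero_le_one)) hu).hasSum
  set S := ∑' n : ℕ, ((harmonic n : ℚ) : ℚ_[p]) • (1 - (u : R)) ^ n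
  have hshift : HasSum
      (fun n : ℕ => ((harmonic (n + 1) : ℚ) : ℚ_[p]) • (1 - (u : R)) ^ (n + 1)) S := by
    simpa using (hasSum_nat_add_iff' 1).2 hsum
  have hterm (n : ℕ) : ((harmonic (n + 1) : ℚ) : ℚ_[p]) • (1 - (u : R)) ^ (n + 1) =
      (1 - u) * ((harmonic n : ℚ) : ℚ_[p]) • (1 - (u : R)) ^ n +
        ((n + 1 : ℕ) : ℚ_[p])⁻¹ • (1 - (u : R)) ^ (n + 1) := by
    rw [harmonic_succ, Rat.cast_add, Rat.cast_inv, Rat.cast_natCast, add_smul, mul_smul_comm,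
      ← pow_succ']
  simp only [hterm] at hshift
  have hrec := (hsum.mul_left (1 - (u : R))).add (hasSum_padicLog p hu)
  have hS : S = (1 - u) * S + -padicLog p (u : R) := hshift.unique hrec
  have hval : S = -(↑u⁻¹ * padicLog p (u : R)) := by
    linear_combination (↑u⁻¹ : R) * hS - S * u.inv_mul
  exact hval ▸ hsum

end PadicLog

/-- Abstracts the normalised integral `f ↦ (1 / (2√a)) ∫ f dx` over `[-√a, √a]`, for functions in
the `K`-algebra `R` of the coordinate `coord`; neither `√a` nor primitives are needed in `R`. -/
structure SymmetricIntegral (K R : Type*) [CommRing K] [CommRing R] [Algebra K R] (a : K) where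
  deriv : Derivation K R R
  coord : R
  deriv_coord : deriv coord = 1
  integral : R →ₗ[K] K
  integral_one : integral 1 = 1
  integral_deriv (f : R) : integral (deriv ((coord ^ 2 - algebraMap K R a) * f)) = 0

/-- The weight `(a - e²) / 4`, which becomes `a s (1 - s)` under `e = √a (2 s - 1)`. -/
def betaWeight {K R : Type*} [Field K] [CommRing R] [Algebra K R] (a : K) (e : R) : R :=
  (4 : K)⁻¹ • (algebraMap K R a - e ^ 2)

namespace SymmetricIntegral

variable {K R : Type*} [Field K] [CommRing R] [Algebra K R] {a : K}

section Algebra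

variable (I : SymmetricIntegral K R a)

/-- The quadratic `x² - a` vanishing at both endpoints. -/
def boundary : R := I.coord ^ 2 - algebraMap K R a

theorem integral_deriv_eq_zero {f : R} (hf : I.boundary ∣ f) : I.integral (I.deriv f) = 0 := by
  obtain ⟨g, rfl⟩ := hf
  exact I.integral_deriv g

theorem integral_mul_deriv {f : R} (hf : I.boundary ∣ f) (g : R) :
    I.integral (f * I.deriv g) = -I.integral (g * I.deriv f) := by
  have h := I.integral_deriv_eq_zero (hf.mul_right g)
  rw [I.deriv.leibniz, smul_eq_mul, smul_eq_mul, map_add] at h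
  exact eq_neg_of_add_eq_zero_left h

variable [CharZero K]

theorem integral_mul_deriv_self {f : R} (hf : I.boundary ∣ f) :
    I.integral (f * I.deriv f) = 0 :=
  self_eq_neg.1 (I.integral_mul_deriv hf f)

end Algebra

end SymmetricIntegral

theorem eq_betaWeight_iff {K R : Type*} [Field K] [CharZero K] [CommRing R] [Algebra K R] {a : K}
    {e z : R} : z = betaWeight a e ↔ 4 * z = algebraMap K R a - e ^ 2 := by
  have h4 : (4 : R) = algebraMap K R 4 := (map_ofNat _ 4).symm
  rw [betaWeight, eq_inv_smul_iff₀ (by norm_num : (4 : K) ≠ 0), h4, ← Algebra.smul_def]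

theorem mul_deriv_eq_neg_two_mul_deriv_betaWeight {K R : Type*} [Field K] [CharZero K] [CommRing R]
    [Algebra K R] (D : Derivation K R R) (a : K) (e : R) :
    e * D e = -(2 * D (betaWeight a e)) := by
  have hfour := congrArg D (eq_betaWeight_iff.1 (rfl : betaWeight a e = _))
  rw [derivation_ofNat_mul] at hfour
  simp only [map_sub, D.leibniz_pow, D.map_algebraMap, smul_eq_mul,
    nsmul_eq_mul] at hfour
  push_cast at hfour
  have hhalf : algebraMap K R 2⁻¹ * 2 = 1 := by
    rw [← map_ofNat (algebraMap K R) 2, ← map_mul, inv_mul_cancel₀ two_ne_zero, map_one]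
  linear_combination algebraMap K R 2⁻¹ * hfour - (e * D e + 2 * D (betaWeight a e)) * hhalf

namespace SymmetricIntegral

variable {K R : Type*} [Field K] [CommRing R] [Algebra K R] {a : K}
  (I : SymmetricIntegral K R a) {e : R}

theorem boundary_dvd_betaWeight (he : I.boundary ∣ e - I.coord) :
    I.boundary ∣ betaWeight a e := by
  have hsplit : algebraMap K R a - e ^ 2 = -(I.boundary + (e - I.coord) * (e + I.coord)) := by
    rw [boundary]; ring
  rw [betaWeight, hsplit, Algebra.smul_def]
  exact ((dvd_add dvd_rfl (he.mul_right _)).neg_right).mul_left _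

variable [CharZero K]

theorem integral_betaWeight_pow_succ (he : I.boundary ∣ e - I.coord) (n : ℕ) :
    2 * (2 * n + 3) * I.integral (betaWeight a e ^ (n + 1) * I.deriv e) =
      (n + 1) * a * I.integral (betaWeight a e ^ n * I.deriv e) := by
  set z := betaWeight a e with hz
  have hprim : I.integral (I.deriv (e * z ^ (n + 1))) = 0 :=
    I.integral_deriv_eq_zero
      ((dvd_pow (I.boundary_dvd_betaWeight he) n.succ_ne_zero).mul_left e)
  have hderiv : (4 : K) • I.deriv (e * z ^ (n + 1)) =
      (4 * (2 * n + 3) : K) • (z ^ (n + 1) * I.deriv e) -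
        (2 * (n + 1) * a : K) • (z ^ n * I.deriv e) := by
    simp only [I.deriv.leibniz, I.deriv.leibniz_pow, smul_eq_mul, nsmul_eq_mul, Nat.add_sub_cancel]
    simp only [Algebra.smul_def, map_mul, map_add, map_ofNat, map_natCast, map_one]
    push_cast
    linear_combination
      (2 * e * (n + 1) * z ^ n) * mul_deriv_eq_neg_two_mul_deriv_betaWeight I.deriv a e -
      (2 * (n + 1) * z ^ n * I.deriv e) * eq_betaWeight_iff.1 hz
  have hint := congrArg I.integral hderiv
  rw [map_smul, hprim, smul_zero, map_sub, map_smul, map_smul, smul_eq_mul, smul_eq_mul] at hint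
  linear_combination (-1 / 2) * hint

theorem integral_betaWeight_pow (he : I.boundary ∣ e - I.coord) (n : ℕ) :
    I.integral (betaWeight a e ^ n * I.deriv e) = a ^ n / ((2 * n + 1) * n.centralBinom) := by
  induction n with
  | zero =>
    have h := I.integral_deriv_eq_zero he
    rw [map_sub, I.deriv_coord, map_sub, I.integral_one, sub_eq_zero] at h
    simp [h]
  | succ n ih =>
    have hrec := I.integral_betaWeight_pow_succ he n
    have hbinom : ((n : K) + 1) * (n + 1).centralBinom = 2 * (2 * n + 1) * n.centralBinom := by
      exact_mod_cast n.succ_mul_centralBinom_succ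
    have hn : (n : K) + 1 ≠ 0 := n.cast_add_one_ne_zero
    have h1 : (2 * n + 1 : K) ≠ 0 := by exact_mod_cast (2 * n).succ_ne_zero
    have h3 : (2 * n + 3 : K) ≠ 0 := by exact_mod_cast (2 * n + 2).succ_ne_zero
    have hc : (n.centralBinom : K) ≠ 0 := Nat.cast_ne_zero.2 n.centralBinom_ne_zero
    have hc' : ((n + 1).centralBinom : K) ≠ 0 := Nat.cast_ne_zero.2 (n + 1).centralBinom_ne_zero
    rw [ih, mul_div_assoc', eq_div_iff (mul_ne_zero h1 hc)] at hrec
    push_cast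
    rw [show 2 * ((n : K) + 1) + 1 = 2 * n + 3 by ring, eq_div_iff (mul_ne_zero h3 hc')]
    refine mul_left_cancel₀ hn ?_
    linear_combination hrec +
      (2 * n + 3) * I.integral (betaWeight a e ^ (n + 1) * I.deriv e) * hbinom

end SymmetricIntegral

/-- The term of `∑ H_n a ^ n / ((2 n + 1) C(2n, n))`. -/
def harmonicBetaTerm {K : Type*} [Field K] (a : K) (n : ℕ) : K :=
  ((harmonic n : ℚ) : K) * (a ^ n / ((2 * n + 1) * n.centralBinom))

namespace SymmetricIntegral

variable {p : ℕ} [Fact p.Prime] {R : Type*} [NormedCommRing R] [NormedAlgebra ℚ_[p] R]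
  [CompleteSpace R] {a : ℚ_[p]} {I : SymmetricIntegral ℚ_[p] R a} {e : R} {η : Rˣ}

theorem hasSum_harmonicBetaTerm (hJ : Continuous I.integral) (he : I.boundary ∣ e - I.coord)
    (hη : 1 - (η : R) = betaWeight a e) (hη_lt : ‖1 - (η : R)‖ < 1) :
    HasSum (harmonicBetaTerm a) (-I.integral (↑η⁻¹ * padicLog p (η : R) * I.deriv e)) := by
  have hterm (n : ℕ) : I.integral
      (((harmonic n : ℚ) : ℚ_[p]) • (1 - (η : R)) ^ n * I.deriv e) = harmonicBetaTerm a n := by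
    rw [smul_mul_assoc, map_smul, hη, I.integral_betaWeight_pow he, harmonicBetaTerm, smul_eq_mul]
  have hsum := ((hasSum_harmonic_smul_pow p hη_lt).mul_right (I.deriv e)).map I.integral hJ
  rw [neg_mul, map_neg] at hsum
  simpa only [Function.comp_def, hterm] using hsum

theorem hasSum_harmonicBetaTerm_of_deriv_eq (hD : Continuous I.deriv) (hJ : Continuous I.integral)
    (he : I.boundary ∣ e - I.coord) (hη : 1 - (η : R) = betaWeight a e)
    (hη_lt : ‖1 - (η : R)‖ < 1) {l : R} {c : ℚ_[p]}
    (hl : I.deriv e = η * I.deriv l + c • (e * I.deriv e)) :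
    HasSum (harmonicBetaTerm a) (I.integral (l * logDerivative I.deriv η)) := by
  set y := padicLog p (η : R)
  have hy : I.boundary ∣ y :=
    (I.boundary_dvd_betaWeight he).trans (hη ▸ one_sub_dvd_padicLog p hη_lt)
  have hDy : I.deriv y = logDerivative I.deriv η := deriv_padicLog p hD hη_lt
  have hsplit : ↑η⁻¹ * y * I.deriv e = y * I.deriv l + (2 * c) • (y * I.deriv y) := by
    have heDe := mul_deriv_eq_neg_two_mul_deriv_betaWeight I.deriv a e
    rw [← hη, map_sub, I.deriv.map_one_eq_zero, zero_sub] at heDe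
    rw [heDe] at hl
    simp only [Algebra.smul_def, map_mul, map_ofNat] at hl ⊢
    rw [hDy, logDerivative]
    linear_combination ↑η⁻¹ * y * hl + y * I.deriv l * η.inv_mul
  convert hasSum_harmonicBetaTerm hJ he hη hη_lt using 1
  rw [hsplit, map_add, map_smul, I.integral_mul_deriv_self hy, smul_zero, add_zero,
    I.integral_mul_deriv hy, neg_neg, hDy]

end SymmetricIntegral

namespace SymmetricIntegral

section Five

variable {R : Type*} [CommRing R] [Algebra ℚ_[5] R] {I : SymmetricIntegral ℚ_[5] R 5}

theorem boundary_five : I.boundary = I.coord ^ 2 - 5 := by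
  rw [boundary, map_ofNat]

theorem deriv_inv_mul {u v w : Rˣ} (hux : (u : R) = 1 - I.coord)
    (hvx : (v : R) = 6 - 2 * I.coord) (hwx : 4 * (w : R) = -(1 + I.coord)) :
    I.deriv (((v * w)⁻¹ : Rˣ) : R) = u * (((v * w)⁻¹ : Rˣ) : R) ^ 2 := by
  have hDv : I.deriv v = -2 := by
    rw [hvx, map_sub, derivation_ofNat, derivation_ofNat_mul, I.deriv_coord]
    ring
  have hDw : 4 * I.deriv w = -1 := by
    rw [← derivation_ofNat_mul, hwx, map_neg, map_add, I.deriv.map_one_eq_zero, I.deriv_coord,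
      zero_add]
  have hx : I.coord = -1 - 4 * w := by linear_combination hwx
  have hDvw : I.deriv ((v * w : Rˣ) : R) = -u := by
    rw [Units.val_mul, I.deriv.leibniz, smul_eq_mul, smul_eq_mul, hDv, hvx, hux, hx]
    linear_combination (2 + 2 * (w : R)) * hDw
  rw [derivation_units_inv, hDvw]
  ring

end Five

variable {R : Type*} [NormedCommRing R] [NormedAlgebra ℚ_[5] R] [IsUltrametricDist R]

theorem exists_principalUnits_eq [CompleteSpace R] [NormOneClass R] {x : R} (hx : ‖x‖ < 1) :
    ∃ u ∈ principalUnits R, ∃ v ∈ principalUnits R, ∃ w ∈ principalUnits R,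
      (u : R) = 1 - x ∧ (v : R) = 6 - 2 * x ∧ 4 * (w : R) = -(1 + x) := by
  have hunit {t : R} (ht : ‖t‖ < 1) : ∃ u ∈ principalUnits R, (u : R) = 1 - t :=
    ⟨.oneSub t ht, by simpa [mem_principalUnits] using ht, rfl⟩
  have h5 : ‖(5 : R)‖ < 1 := by
    have h := norm_algebraMap' R (5 : ℚ_[5])
    rw [map_ofNat] at h
    rw [h]
    exact_mod_cast Padic.norm_p_lt_one (p := 5)
  have h4 : ‖(4 : ℚ_[5])⁻¹‖ = 1 := by
    rw [norm_inv, inv_eq_one]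
    exact_mod_cast (Padic.norm_natCast_eq_one_iff (p := 5) (n := 4)).2 (by norm_num)
  have hx5 : ‖x + 5‖ < 1 := (IsUltrametricDist.norm_add_le_max _ _).trans_lt (max_lt hx h5)
  have hx25 : ‖x + (x + -5)‖ < 1 :=
    (IsUltrametricDist.norm_add_le_max _ _).trans_lt (max_lt hx
      ((IsUltrametricDist.norm_add_le_max _ _).trans_lt (max_lt hx ((norm_neg _).trans_lt h5))))
  have hx54 : ‖(4 : ℚ_[5])⁻¹ • (x + 5)‖ < 1 := by rwa [norm_smul, h4, one_mul]
  obtain ⟨u, hu, hux⟩ := hunit hx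
  obtain ⟨v, hv, hvx⟩ := hunit hx25
  obtain ⟨w, hw, hwx⟩ := hunit hx54
  refine ⟨u, hu, v, hv, w, hw, hux, by rw [hvx]; ring, ?_⟩
  have hfour : 4 * ((4 : ℚ_[5])⁻¹ • (x + 5)) = x + 5 := by
    have h : (4 : R) = algebraMap ℚ_[5] R 4 := (map_ofNat _ 4).symm
    rw [h, ← Algebra.smul_def, smul_inv_smul₀ (by norm_num)]
  rw [hwx]
  linear_combination -hfour

variable [CompleteSpace R] {I : SymmetricIntegral ℚ_[5] R 5} {u v w : Rˣ}

theorem deriv_four_mul_padicLog (hD : Continuous I.deriv) (hu : u ∈ principalUnits R)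
    (hux : (u : R) = 1 - I.coord) :
    I.deriv (4 * padicLog 5 (u : R)) = -(4 * ↑u⁻¹) := by
  rw [derivation_ofNat_mul, deriv_padicLog 5 hD hu, logDerivative, hux, map_sub,
    I.deriv.map_one_eq_zero, I.deriv_coord]
  ring

theorem hasSum_harmonicBetaTerm_coord (hD : Continuous I.deriv) (hJ : Continuous I.integral)
    (hu : u ∈ principalUnits R) (hw : w ∈ principalUnits R)
    (hux : (u : R) = 1 - I.coord) (hwx : 4 * (w : R) = -(1 + I.coord)) :
    HasSum (harmonicBetaTerm 5)
      (I.integral (4 * padicLog 5 (u : R) * logDerivative I.deriv (u * w))) := by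
  refine hasSum_harmonicBetaTerm_of_deriv_eq (e := I.coord) (c := -1) hD hJ (by simp)
    (eq_betaWeight_iff.2 ?_) (mul_mem hu hw) ?_
  · rw [map_ofNat, Units.val_mul, hux]
    linear_combination (I.coord - 1) * hwx
  · rw [deriv_four_mul_padicLog hD hu hux, I.deriv_coord, neg_one_smul, Units.val_mul]
    linear_combination hwx + 4 * (w : R) * u.mul_inv

theorem hasSum_harmonicBetaTerm_inv (hD : Continuous I.deriv) (hJ : Continuous I.integral)
    (hu : u ∈ principalUnits R) (hv : v ∈ principalUnits R)
    (hux : (u : R) = 1 - I.coord) (hvx : (v : R) = 6 - 2 * I.coord) :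
    HasSum (harmonicBetaTerm 5)
      (I.integral (4 * padicLog 5 (u : R) * logDerivative I.deriv (v * u⁻¹ ^ 2))) := by
  have hx : I.coord = 1 - u := by rw [hux]; ring
  have hvu : (v : R) = 4 + 2 * u := by rw [hux, hvx]; ring
  have hDe : I.deriv (-1 - 4 * ((u⁻¹ : Rˣ) : R)) = -(4 * ↑u⁻¹ ^ 2) := by
    rw [map_sub, map_neg, I.deriv.map_one_eq_zero, derivation_ofNat_mul, derivation_units_inv,
      hux, map_sub, I.deriv.map_one_eq_zero, I.deriv_coord]
    ring
  refine hasSum_harmonicBetaTerm_of_deriv_eq (e := -1 - 4 * ((u⁻¹ : Rˣ) : R)) (c := 1) hD hJ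
    ⟨↑u⁻¹, ?_⟩ (eq_betaWeight_iff.2 ?_) (mul_mem hv (pow_mem (inv_mem hu) 2)) ?_
  · rw [boundary_five, hx]
    linear_combination (2 - (u : R)) * u.mul_inv
  · rw [map_ofNat, Units.val_mul, Units.val_pow_eq_pow_val, hvu]
    linear_combination (-8 * ↑u⁻¹) * u.mul_inv
  · rw [deriv_four_mul_padicLog hD hu hux, hDe, one_smul, Units.val_mul, Units.val_pow_eq_pow_val,
      hvu]
    linear_combination (8 * ↑u⁻¹ ^ 2) * u.mul_inv

theorem hasSum_harmonicBetaTerm_inv_mul (hD : Continuous I.deriv) (hJ : Continuous I.integral)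
    (hu : u ∈ principalUnits R) (hv : v ∈ principalUnits R) (hw : w ∈ principalUnits R)
    (hux : (u : R) = 1 - I.coord) (hvx : (v : R) = 6 - 2 * I.coord)
    (hwx : 4 * (w : R) = -(1 + I.coord)) :
    HasSum (harmonicBetaTerm 5)
      (I.integral (4 * padicLog 5 (u : R) * logDerivative I.deriv ((u * (v * w)⁻¹) ^ 2))) := by
  set q : Rˣ := (v * w)⁻¹ with hq
  have hx : I.coord = -1 - 4 * w := by linear_combination hwx
  have huw : (u : R) = 2 + 4 * w := by rw [hux, hx]; ring
  have hvw : (v : R) = 8 + 8 * w := by rw [hvx, hx]; ring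
  have hqv : (q : R) * (v * w) = 1 := by rw [← Units.val_mul, hq, Units.inv_mul]
  have hDq : I.deriv q = u * q ^ 2 := deriv_inv_mul hux hvx hwx
  refine hasSum_harmonicBetaTerm_of_deriv_eq (e := -1 - 4 * (q : R)) (c := 0) hD hJ
    ⟨(1 + 2 * w) * q, ?_⟩ (eq_betaWeight_iff.2 ?_)
    (pow_mem (mul_mem hu (inv_mem (mul_mem hv hw))) 2) ?_
  · rw [boundary_five, hx]
    rw [hvw] at hqv
    linear_combination (-4 * (w : R)) * hqv
  · rw [← hq, map_ofNat, Units.val_pow_eq_pow_val, Units.val_mul, huw]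
    rw [hvw] at hqv
    linear_combination (-8 * (q : R)) * hqv
  · rw [← hq, deriv_four_mul_padicLog hD hu hux, map_sub, map_neg, I.deriv.map_one_eq_zero,
      derivation_ofNat_mul, hDq, zero_smul, Units.val_pow_eq_pow_val, Units.val_mul]
    linear_combination (4 * u * q ^ 2) * u.mul_inv

theorem hasSum_harmonicBetaTerm_five [NormOneClass R] (hD : Continuous I.deriv)
    (hJ : Continuous I.integral) (hx : ‖I.coord‖ < 1) :
    HasSum (harmonicBetaTerm (5 : ℚ_[5])) 0 := by
  obtain ⟨u, hu, v, hv, w, hw, hux, hvx, hwx⟩ := exists_principalUnits_eq hx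
  set l := 4 * padicLog 5 (u : R)
  have h₀ := hasSum_harmonicBetaTerm_coord hD hJ hu hw hux hwx
  have h₁ := hasSum_harmonicBetaTerm_inv hD hJ hu hv hux hvx
  have h₂ := hasSum_harmonicBetaTerm_inv_mul hD hJ hu hv hw hux hvx hwx
  have hdlog : 2 * logDerivative I.deriv (u * w) + 2 * logDerivative I.deriv (v * u⁻¹ ^ 2) +
      logDerivative I.deriv ((u * (v * w)⁻¹) ^ 2) = 0 := by
    simp only [logDerivative_mul, logDerivative_sq, logDerivative_inv]
    ring
  have hfive : 5 * I.integral (l * logDerivative I.deriv (u * w)) = 0 := by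
    calc 5 * I.integral (l * logDerivative I.deriv (u * w))
      _ = 2 * I.integral (l * logDerivative I.deriv (u * w)) +
            2 * I.integral (l * logDerivative I.deriv (v * u⁻¹ ^ 2)) +
            I.integral (l * logDerivative I.deriv ((u * (v * w)⁻¹) ^ 2)) := by
        rw [h₁.unique h₀, h₂.unique h₀]
        ring
      _ = I.integral (l * 0) := by
        rw [← hdlog]
        simp only [two_mul, mul_add, map_add]
      _ = 0 := by rw [mul_zero, map_zero]
  rwa [(mul_eq_zero.1 hfive).resolve_left (by norm_num)] at h₀

end SymmetricIntegral

section PolynomialModel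

open Polynomial

variable {K : Type*} [Field K]

/-- The normalised integral of `x ^ n` over `[-√a, √a]`. -/
def symmetricMoment (a : K) (n : ℕ) : K :=
  if Even n then a ^ (n / 2) / (n + 1) else 0

/-- The normalised integral of a polynomial over `[-√a, √a]`. -/
noncomputable def polynomialIntegral (a : K) : K[X] →ₗ[K] K :=
  lsum fun n => LinearMap.mulRight K (symmetricMoment a n)

theorem polynomialIntegral_apply (a : K) (f : K[X]) :
    polynomialIntegral a f = ∑ n ∈ f.support, f.coeff n * symmetricMoment a n := by
  simp [polynomialIntegral, lsum_apply, sum_def]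

theorem polynomialIntegral_monomial (a : K) (n : ℕ) (c : K) :
    polynomialIntegral a (monomial n c) = c * symmetricMoment a n := by
  simp [polynomialIntegral, sum_monomial_index]

variable [CharZero K]

theorem symmetricMoment_add_two (a : K) (n : ℕ) :
    (n + 3) * symmetricMoment a (n + 2) = a * ((n + 1) * symmetricMoment a n) := by
  have h₁ : (n + 1 : K) ≠ 0 := n.cast_add_one_ne_zero
  have h₃ : (n + 3 : K) ≠ 0 := by exact_mod_cast (n + 2).succ_ne_zero
  by_cases hn : Even n
  · rw [symmetricMoment, symmetricMoment, if_pos hn, if_pos (hn.add even_two), Nat.cast_add,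
      Nat.cast_two, show (n : K) + 2 + 1 = n + 3 by ring, mul_div_cancel₀ _ h₃,
      mul_div_cancel₀ _ h₁, Nat.add_div_right n two_pos, pow_succ']
  · have hn' : ¬Even (n + 2) := by rwa [Nat.even_add, iff_true_right even_two]
    rw [symmetricMoment, symmetricMoment, if_neg hn, if_neg hn']
    ring

theorem polynomialIntegral_derivative (a : K) (f : K[X]) :
    polynomialIntegral a (derivative ((X ^ 2 - C a) * f)) = 0 := by
  induction f using Polynomial.induction_on' with
  | add f g hf hg => rw [mul_add, map_add, map_add, hf, hg, add_zero]
  | monomial n c =>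
    rw [sub_mul, X_pow_mul_monomial, C_mul_monomial, map_sub, map_sub, derivative_monomial,
      derivative_monomial, polynomialIntegral_monomial, polynomialIntegral_monomial]
    rcases n with _ | n
    · simp [symmetricMoment]
    · have hrec := symmetricMoment_add_two a n
      rw [show n + 1 + 2 - 1 = n + 2 by lia, Nat.add_sub_cancel]
      push_cast
      linear_combination c * hrec

/-- The symmetric integral on polynomials. -/
noncomputable def polynomialSymmetricIntegral (a : K) : SymmetricIntegral K K[X] a where
  deriv := derivative'
  coord := X
  deriv_coord := derivative_X
  integral := polynomialIntegral a
  integral_one := by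
    rw [← monomial_zero_one, polynomialIntegral_monomial]
    simp [symmetricMoment]
  integral_deriv := polynomialIntegral_derivative a

end PolynomialModel

section Completion

open UniformSpace

instance normOneClass_completion {A : Type*} [SeminormedRing A] [NormOneClass A] :
    NormOneClass (Completion A) where
  norm_one := by rw [← Completion.coe_one, Completion.norm_coe, norm_one]

instance isUltrametricDist_completion {A : Type*} [SeminormedAddCommGroup A]
    [IsUltrametricDist A] :
    IsUltrametricDist (Completion A) :=
  IsUltrametricDist.isUltrametricDist_of_forall_norm_add_le_max_norm fun f g => by
    induction f, g using Completion.induction_on₂ with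
    | hp => exact isClosed_le (by fun_prop) (by fun_prop)
    | ih f g =>
      rw [← Completion.coe_add]
      simpa only [Completion.norm_coe] using IsUltrametricDist.norm_add_le_max f g

variable {K A : Type*} [NormedField K] [NormedCommRing A] [NormedAlgebra K A]

/-- The extension of a continuous derivation to the completion. -/
noncomputable def completionDerivation (D : Derivation K A A) (hD : Continuous D) :
    Derivation K (Completion A) (Completion A) :=
  let D' : A →L[K] A := ⟨D, hD⟩
  .mk' D'.completion fun f g => by
    change D'.completion (f * g) = f * D'.completion g + g * D'.completion f
    induction f, g using Completion.induction_on₂ with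
    | hp => exact isClosed_eq (by fun_prop) (by fun_prop)
    | ih f g =>
      rw [← Completion.coe_mul]
      simp only [ContinuousLinearMap.completion_apply_coe, ← Completion.coe_mul,
        ← Completion.coe_add]
      exact congrArg _ (D.leibniz f g)

theorem continuous_completionDerivation {D : Derivation K A A} (hD : Continuous D) :
    Continuous (completionDerivation D hD) :=
  ContinuousLinearMap.continuous _

theorem completionDerivation_coe {D : Derivation K A A} (hD : Continuous D) (f : A) :
    completionDerivation D hD f = (D f : Completion A) :=
  ContinuousLinearMap.completion_apply_coe (⟨D, hD⟩ : A →L[K] A) f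

variable [CompleteSpace K] {a : K}

/-- The extension of a continuous symmetric integral to the completion. -/
noncomputable def SymmetricIntegral.completion (I : SymmetricIntegral K A a)
    (hD : Continuous I.deriv) (hJ : Continuous I.integral) :
    SymmetricIntegral K (Completion A) a :=
  let J : A →L[K] K := ⟨I.integral, hJ⟩
  { deriv := completionDerivation I.deriv hD
    coord := I.coord
    deriv_coord := by rw [completionDerivation_coe, I.deriv_coord, Completion.coe_one]
    integral := J.fromCompletion
    integral_one := by
      rw [← Completion.coe_one]
      exact (J.fromCompletion_apply_coe 1).trans I.integral_one
    integral_deriv := fun f => by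
      have hcont := continuous_completionDerivation hD
      change J.fromCompletion _ = 0
      induction f using Completion.induction_on with
      | hp => exact isClosed_eq (by fun_prop) (by fun_prop)
      | ih f =>
        rw [Completion.algebraMap_def, pow_two, ← Completion.coe_mul, ← Completion.coe_sub,
          ← Completion.coe_mul, ← pow_two, completionDerivation_coe, J.fromCompletion_apply_coe]
        exact I.integral_deriv f }

end Completion

section GaussNorm

open Polynomial

/-- A type synonym of `K[X]`, normed by the Gauss norm `max ‖aₙ‖ r ^ n` of radius `r`. -/
def GaussPolynomial (K : Type*) [NormedField K] (_r : ℝ) : Type _ := K[X]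

namespace GaussPolynomial

variable {K : Type*} [NormedField K] {r : ℝ}

noncomputable instance : CommRing (GaussPolynomial K r) := inferInstanceAs (CommRing K[X])

noncomputable instance : Algebra K (GaussPolynomial K r) := inferInstanceAs (Algebra K K[X])

/-- The identity, as an algebra isomorphism onto the type synonym. -/
noncomputable def ofPolynomial : K[X] ≃ₐ[K] GaussPolynomial K r := AlgEquiv.refl

section SymmetricIntegral

variable [CharZero K]

/-- The symmetric integral of polynomials, on the normed type synonym. -/
noncomputable def symmetricIntegral (a : K) : SymmetricIntegral K (GaussPolynomial K r) a :=
  polynomialSymmetricIntegral a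

theorem deriv_ofPolynomial (a : K) (f : K[X]) :
    (symmetricIntegral a).deriv (ofPolynomial f : GaussPolynomial K r) =
      ofPolynomial (derivative f) :=
  rfl

theorem integral_ofPolynomial (a : K) (f : K[X]) :
    (symmetricIntegral a).integral (ofPolynomial f : GaussPolynomial K r) =
      polynomialIntegral a f :=
  rfl

end SymmetricIntegral

variable [IsUltrametricDist K]

theorem isNonarchimedean_toAbsoluteValue : IsNonarchimedean (NormedField.toAbsoluteValue K) :=
  IsUltrametricDist.norm_add_le_max

/-- The Gauss norm of radius `r` as an absolute value. -/
noncomputable def gaussAbsoluteValue (hr : 0 < r) : AbsoluteValue K[X] ℝ :=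
  haveI := gaussNorm_isAbsoluteValue (v := NormedField.toAbsoluteValue K)
    isNonarchimedean_toAbsoluteValue hr
  IsAbsoluteValue.toAbsoluteValue (gaussNorm (NormedField.toAbsoluteValue K) r)

variable [hr : Fact (0 < r)]

noncomputable instance : NormedCommRing (GaussPolynomial K r) where
  __ := (inferInstance : CommRing (GaussPolynomial K r))
  __ := AbsoluteValue.toNormedRing <| (gaussAbsoluteValue hr.out).comp
    (f := (ofPolynomial (K := K) (r := r)).symm.toRingEquiv.toRingHom) ofPolynomial.symm.injective

theorem norm_ofPolynomial (f : K[X]) :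
    ‖(ofPolynomial f : GaussPolynomial K r)‖ =
      f.gaussNorm (NormedField.toAbsoluteValue K) r :=
  rfl

theorem norm_monomial (n : ℕ) (c : K) :
    ‖(ofPolynomial (monomial n c) : GaussPolynomial K r)‖ = ‖c‖ * r ^ n :=
  gaussNorm_monomial _ _ n c

theorem norm_coeff_mul_pow_le (f : K[X]) (n : ℕ) :
    ‖f.coeff n‖ * r ^ n ≤ ‖(ofPolynomial f : GaussPolynomial K r)‖ :=
  le_gaussNorm (NormedField.toAbsoluteValue K) f hr.out.le n

theorem norm_le_of_forall_coeff {f : K[X]} {B : ℝ} (h : ∀ n, ‖f.coeff n‖ * r ^ n ≤ B) :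
    ‖(ofPolynomial f : GaussPolynomial K r)‖ ≤ B := by
  obtain ⟨n, hn⟩ := exists_eq_gaussNorm (NormedField.toAbsoluteValue K) r f
  exact (norm_ofPolynomial f).trans hn |>.trans_le (h n)

noncomputable instance : NormedAlgebra K (GaussPolynomial K r) where
  toAlgebra := inferInstance
  norm_smul_le c f := by
    rw [Algebra.smul_def]
    refine (norm_mul_le _ _).trans_eq ?_
    congr 1
    exact (norm_monomial 0 c).trans (by rw [pow_zero, mul_one])

instance : NormOneClass (GaussPolynomial K r) where
  norm_one := (norm_monomial 0 (1 : K)).trans (by rw [pow_zero, mul_one, norm_one])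

instance : IsUltrametricDist (GaussPolynomial K r) :=
  IsUltrametricDist.isUltrametricDist_of_forall_norm_add_le_max_norm
    (isNonarchimedean_gaussNorm _ isNonarchimedean_toAbsoluteValue hr.out.le)

variable [CharZero K]

theorem norm_coord (a : K) :
    ‖(symmetricIntegral a : SymmetricIntegral K (GaussPolynomial K r) a).coord‖ = r := by
  have h := norm_monomial (r := r) 1 (1 : K)
  rwa [norm_one, one_mul, pow_one, monomial_one_one_eq_X] at h

theorem continuous_deriv (a : K) :
    Continuous (symmetricIntegral a : SymmetricIntegral K (GaussPolynomial K r) a).deriv := by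
  refine AddMonoidHomClass.continuous_of_bound _ r⁻¹ fun f => ?_
  obtain ⟨f, rfl⟩ := ofPolynomial.surjective f
  rw [deriv_ofPolynomial]
  refine norm_le_of_forall_coeff fun n => ?_
  have hn : ‖(n + 1 : K)‖ ≤ 1 := by
    exact_mod_cast IsUltrametricDist.norm_natCast_le_one K (n + 1)
  calc ‖(derivative f).coeff n‖ * r ^ n
    _ = ‖f.coeff (n + 1)‖ * ‖(n + 1 : K)‖ * r ^ n := by rw [coeff_derivative, norm_mul]
    _ ≤ ‖f.coeff (n + 1)‖ * r ^ n :=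
      mul_le_mul_of_nonneg_right (mul_le_of_le_one_right (norm_nonneg _) hn)
        (pow_nonneg hr.out.le n)
    _ = r⁻¹ * (‖f.coeff (n + 1)‖ * r ^ (n + 1)) := by
      rw [pow_succ, mul_left_comm, mul_comm (r ^ n), inv_mul_cancel_left₀ hr.out.ne']
    _ ≤ r⁻¹ * ‖ofPolynomial f‖ :=
      mul_le_mul_of_nonneg_left (norm_coeff_mul_pow_le f (n + 1)) (inv_nonneg.2 hr.out.le)

theorem continuous_integral {a : K} {B : ℝ} (hB : ∀ n, ‖symmetricMoment a n‖ ≤ B * r ^ n) :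
    Continuous (symmetricIntegral a : SymmetricIntegral K (GaussPolynomial K r) a).integral := by
  refine AddMonoidHomClass.continuous_of_bound _ B fun f => ?_
  obtain ⟨f, rfl⟩ := ofPolynomial.surjective f
  have hB₀ : 0 ≤ B := by simpa using (norm_nonneg _).trans (hB 0)
  rw [integral_ofPolynomial, polynomialIntegral_apply]
  refine IsUltrametricDist.norm_sum_le_of_forall_le_of_nonneg (by positivity) fun n _ => ?_
  calc ‖f.coeff n * symmetricMoment a n‖
    _ ≤ ‖f.coeff n‖ * (B * r ^ n) := by
      rw [norm_mul]
      gcongr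
      exact hB n
    _ = B * (‖f.coeff n‖ * r ^ n) := by ring
    _ ≤ B * ‖ofPolynomial f‖ := by
      gcongr
      exact norm_coeff_mul_pow_le f n

end GaussPolynomial

theorem padic_norm_symmetricMoment_le {p : ℕ} [Fact p.Prime] {a : ℚ_[p]} {r : ℝ} (hr : 0 < r)
    (ha : ‖a‖ < r ^ 2) : ∃ B, ∀ n, ‖symmetricMoment a n‖ ≤ B * r ^ n := by
  have hq : ‖a‖ / r ^ 2 < 1 := (div_lt_one (by positivity)).2 ha
  obtain ⟨B, hB⟩ : ∃ B, ∀ m : ℕ, (2 * m + 1) * (‖a‖ / r ^ 2) ^ m ≤ B := by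
    have hlim := ((tendsto_self_mul_const_pow_of_lt_one (by positivity) hq).const_mul 2).add
      (tendsto_pow_atTop_nhds_zero_of_lt_one (by positivity) hq)
    obtain ⟨B, hB⟩ := hlim.bddAbove_range
    exact ⟨B, fun m => by linarith [hB ⟨m, rfl⟩]⟩
  have hB₀ : 0 ≤ B := zero_le_one.trans (by simpa using hB 0)
  refine ⟨B, fun n => ?_⟩
  rcases n.even_or_odd' with ⟨m, rfl | rfl⟩
  · have hinv : ‖((2 * m + 1 : ℕ) : ℚ_[p])⁻¹‖ ≤ 2 * m + 1 := by
      exact_mod_cast padic_norm_inv_natCast_le (p := p) (2 * m + 1)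
    rw [symmetricMoment, if_pos (even_two_mul m), Nat.mul_div_cancel_left m two_pos, div_eq_mul_inv]
    calc ‖a ^ m * (((2 * m : ℕ) : ℚ_[p]) + 1)⁻¹‖
      _ ≤ ‖a‖ ^ m * (2 * m + 1) := by
        rw [norm_mul, norm_pow, ← Nat.cast_succ]
        gcongr
      _ = (2 * m + 1) * (‖a‖ / r ^ 2) ^ m * r ^ (2 * m) := by
        rw [div_pow, ← pow_mul]
        field_simp
      _ ≤ B * r ^ (2 * m) := by
        gcongr
        exact hB m
  · rw [symmetricMoment, if_neg (Nat.not_even_two_mul_add_one m), norm_zero]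
    positivity

end GaussNorm

theorem hasSum_harmonicBetaTerm_five : HasSum (harmonicBetaTerm (5 : ℚ_[5])) 0 := by
  have : Fact ((0 : ℝ) < 1 / 2) := ⟨by norm_num⟩
  have hnorm : ‖(5 : ℚ_[5])‖ = 5⁻¹ := by exact_mod_cast Padic.norm_p (p := 5)
  obtain ⟨B, hB⟩ := padic_norm_symmetricMoment_le (p := 5) (a := 5) (r := 1 / 2) (by norm_num)
    (by rw [hnorm]; norm_num)
  set I : SymmetricIntegral ℚ_[5] (GaussPolynomial ℚ_[5] (1 / 2)) 5 :=
    GaussPolynomial.symmetricIntegral 5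
  have hD : Continuous I.deriv := GaussPolynomial.continuous_deriv 5
  have hJ : Continuous I.integral := GaussPolynomial.continuous_integral hB
  refine (I.completion hD hJ).hasSum_harmonicBetaTerm_five (continuous_completionDerivation hD)
    (ContinuousLinearMap.continuous _) ?_
  calc ‖(I.completion hD hJ).coord‖
    _ = (1 / 2 : ℝ) := (UniformSpace.Completion.norm_coe _).trans (GaussPolynomial.norm_coord 5)
    _ < 1 := by norm_num

theorem div_choose_eq_inv_two_mul_harmonicBetaTerm {K : Type*} [Field K] [CharZero K]
    (a : K) (j : ℕ) :
    a ^ (j + 1) * ((harmonic (j + 1) : ℚ) : K) / ((j + 2) * Nat.choose (2 * (j + 2)) (j + 2)) =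
      2⁻¹ * harmonicBetaTerm a (j + 1) := by
  have hbinom : (j + 2 : K) * Nat.choose (2 * (j + 2)) (j + 2) =
      2 * ((2 * ((j + 1 : ℕ) : K) + 1) * (j + 1).centralBinom) := by
    rw [← Nat.centralBinom_eq_two_mul_choose, ← mul_assoc]
    exact_mod_cast (j + 1).succ_mul_centralBinom_succ
  rw [hbinom, harmonicBetaTerm, ← div_div, mul_comm, mul_div_assoc', mul_comm (harmonic _ : K)]
  field_simp

/-- In `ℚ₅`, the series `b₂(-5) = ∑_{k≥2} (-1)^{k-1}(-5)^{k-1} H_{k-1}/(k · C(2k,k))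
= ∑_{k≥2} 5^{k-1} H_{k-1}/(k · C(2k,k))` converges and equals `0`
(indexed below by `k = j + 2`). -/
theorem stmt_17 :
    Summable (fun j : ℕ => (5 : ℚ_[5]) ^ (j + 1) * ((harmonic (j + 1) : ℚ) : ℚ_[5]) /
        ((j + 2 : ℚ_[5]) * (Nat.choose (2 * (j + 2)) (j + 2) : ℚ_[5]))) ∧
      ∑' j : ℕ, (5 : ℚ_[5]) ^ (j + 1) * ((harmonic (j + 1) : ℚ) : ℚ_[5]) /
        ((j + 2 : ℚ_[5]) * (Nat.choose (2 * (j + 2)) (j + 2) : ℚ_[5])) = 0 := by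
  simp only [div_choose_eq_inv_two_mul_harmonicBetaTerm]
  have hsum : HasSum (fun j : ℕ => 2⁻¹ * harmonicBetaTerm (5 : ℚ_[5]) (j + 1)) 0 := by
    simpa [harmonicBetaTerm] using
      ((hasSum_nat_add_iff' 1).2 hasSum_harmonicBetaTerm_five).mul_left (2⁻¹ : ℚ_[5])
  exact ⟨hsum.summable, hsum.tsum_eq⟩
end
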